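/- arXiv:1712.03205 — 9 statements merged into one kernel-verified Lean document; each statement's English description precedes it below -/
import Mathlib

section
/- Let (V, d_V) be a cochain complex of ℂ-vector spaces admitting a Hodge type decomposition (W, 𝓜), and regard W as a cochain complex with zero differential. Then there exist cochain maps f : V → W and g : W → V and a homotopy h between g ∘ f and id_V such that f ∘ g = id_W and the side conditions f ∘ h = 0, h ∘ g = 0 and h ∘ h = 0 hold. (Moreover one may take g to be the inclusion of W into V and f the projection onto W along d_V(𝓜) ⊕ 𝓜.) -/
/-!
Since `V = W ⊕ d𝓜 ⊕ 𝓜` and `d` kills `W ⊕ d𝓜`, every exact element already lies in `d𝓜`, so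
`V = W ⊕ im d ⊕ 𝓜`. As `W` represents all of cohomology, `ker d = W ⊕ im d`; thus `𝓜` is a
complement of `ker d` and `d` restricts to an isomorphism `𝓜 ≃ im d`. Take `h` to be minus the
inverse of this isomorphism, extended by zero on `W ⊕ 𝓜`: then `d h` is minus the projection onto
`im d` and `h d` is minus the projection onto `𝓜`, so `d h + h d` is the projection onto `W` minus
the identity.
-/

open LinearMap

section Modules

variable {R E F G : Type*} [Ring R] [AddCommGroup E] [Module R E] [AddCommGroup F] [Module R F]
  [AddCommGroup G] [Module R G]

theorem isCompl_sup_of_isInternal_fin_three {A B C : Submodule R E}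
    (h : DirectSum.IsInternal ![A, B, C]) :
    IsCompl A (B ⊔ C) ∧ IsCompl B (C ⊔ A) ∧ IsCompl C (A ⊔ B) := by
  have hsup : A ⊔ B ⊔ C = ⊤ := by simpa using h.submodule_iSup_eq_top
  obtain ⟨hA, hB, hC⟩ := iSupIndep_fin_three.1 h.submodule_iSupIndep
  refine ⟨⟨hA, codisjoint_iff.2 ?_⟩, ⟨hB, codisjoint_iff.2 ?_⟩, ⟨hC, codisjoint_iff.2 ?_⟩⟩
  · rw [← sup_assoc, hsup]
  · rw [← sup_assoc, sup_comm, ← sup_assoc, hsup]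
  · rw [sup_comm, hsup]

theorem projection_add_projection_add_projection {A B C K : Submodule R E}
    (hA : IsCompl A (B ⊔ C)) (hB : IsCompl B (C ⊔ A)) (hC : IsCompl C K) (hK : A ⊔ B ≤ K) (x : E) :
    A.projection _ hA x + B.projection _ hB x + C.projection _ hC x = x := by
  have hx : x ∈ A ⊔ (B ⊔ C) := hA.sup_eq_top ▸ Submodule.mem_top
  obtain ⟨a, ha, y, hy, rfl⟩ := Submodule.mem_sup.1 hx
  obtain ⟨b, hb, c, hc, rfl⟩ := Submodule.mem_sup.1 hy
  have hprojA : A.projection _ hA (a + (b + c)) = a := by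
    rw [map_add, Submodule.projection_apply_of_mem_left hA ha,
      (Submodule.projection_apply_eq_zero_iff hA).2 hy, add_zero]
  have hprojB : B.projection _ hB (a + (b + c)) = b := by
    rw [add_left_comm, map_add, Submodule.projection_apply_of_mem_left hB hb,
      (Submodule.projection_apply_eq_zero_iff hB).2 (add_comm c a ▸ Submodule.add_mem_sup hc ha),
      add_zero]
  have hprojC : C.projection _ hC (a + (b + c)) = c := by
    rw [← add_assoc, map_add, Submodule.projection_apply_of_mem_left hC hc,
      (Submodule.projection_apply_eq_zero_iff hC).2 (hK (Submodule.add_mem_sup ha hb)), zero_add]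
  rw [hprojA, hprojB, hprojC, add_assoc]

variable (f : E →ₗ[R] F) {M : Submodule R E} {K : Submodule R F}

/-- The generalized inverse of `f` determined by a complement `M` of its kernel and a complement
`K` of its range: it inverts the isomorphism `M ≃ range f` induced by `f` and vanishes on `K`. -/
noncomputable def generalizedInverse (hM : IsCompl M (ker f)) (hK : IsCompl (range f) K) :
    F →ₗ[R] E :=
  M.subtype ∘ₗ (f.kerComplementEquivRange hM).symm.toLinearMap ∘ₗ (range f).projectionOnto K hK

variable (hM : IsCompl M (ker f)) (hK : IsCompl (range f) K)

theorem generalizedInverse_mem (y : F) : generalizedInverse f hM hK y ∈ M :=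
  Subtype.property _

theorem generalizedInverse_apply_of_mem {y : F} (hy : y ∈ K) :
    generalizedInverse f hM hK y = 0 := by
  rw [generalizedInverse, comp_apply, comp_apply,
    (Submodule.projectionOnto_apply_eq_zero_iff hK).2 hy, map_zero, map_zero]

theorem apply_generalizedInverse (y : F) :
    f (generalizedInverse f hM hK y) = (range f).projection K hK y :=
  congrArg Subtype.val ((f.kerComplementEquivRange hM).apply_symm_apply _)

theorem generalizedInverse_apply_apply (x : E) :
    generalizedInverse f hM hK (f x) = M.projection (ker f) hM x := by
  have hker : x - generalizedInverse f hM hK (f x) ∈ ker f := by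
    rw [mem_ker, map_sub, apply_generalizedInverse,
      Submodule.projection_apply_of_mem_left hK (mem_range_self f x), sub_self]
  have hproj := (Submodule.projection_apply_eq_zero_iff hM).2 hker
  rw [map_sub, sub_eq_zero, Submodule.projection_apply_of_mem_left hM
    (generalizedInverse_mem f hM hK _)] at hproj
  exact hproj.symm

theorem projection_sub_self_eq_neg_generalizedInverse (g : F →ₗ[R] G) {W N : Submodule R F}
    {L : Submodule R G} (hM : IsCompl M (ker f)) (hf : IsCompl (range f) (N ⊔ W))
    (hN : IsCompl N (ker g)) (hg : IsCompl (range g) L) (hW : IsCompl W (range f ⊔ N))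
    (hclosed : W ⊔ range f ≤ ker g) (y : F) :
    W.projection _ hW y - y
      = -f (generalizedInverse f hM hf y) - generalizedInverse g hN hg (g y) := by
  have hsum := projection_add_projection_add_projection hW hf hN hclosed y
  rw [apply_generalizedInverse, generalizedInverse_apply_apply]
  nth_rw 2 [← hsum]
  abel

end Modules

theorem exists_forall_add_one_eq {T : ℤ → Sort*} (t : ∀ j, T (j + 1)) :
    ∃ s : ∀ i, T i, ∀ j, s (j + 1) = t j :=
  ⟨(Equiv.addRight 1).piCongrLeft T t, Equiv.piCongrLeft_apply_apply T (Equiv.addRight 1) t⟩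

theorem forall_int_iff_forall_add_one {P : ℤ → Prop} : (∀ i, P i) ↔ ∀ j, P (j + 1) :=
  (Equiv.addRight 1).surjective.forall

section Complexes

variable {R : Type*} [Ring R] {V : ℤ → Type*} [∀ i, AddCommGroup (V i)] [∀ i, Module R (V i)]
  {d : ∀ i, V i →ₗ[R] V (i + 1)} {W M : ∀ i, Submodule R (V i)}

theorem map_eq_range_of_isInternal (hd : ∀ i, (d (i + 1)).comp (d i) = 0)
    (hWclosed : ∀ i, W i ≤ ker (d i))
    (hdirect : ∀ i, DirectSum.IsInternal ![W (i + 1), (M i).map (d i), M (i + 1)]) :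
    ∀ i, (M i).map (d i) = range (d i) := by
  refine forall_int_iff_forall_add_one.2 fun j => Submodule.map_eq_range_iff.2 ?_
  have hexact : (M j).map (d j) ≤ ker (d (j + 1)) :=
    map_le_range.trans (range_le_ker_iff.2 (hd j))
  exact (isCompl_sup_of_isInternal_fin_three (hdirect j)).2.2.codisjoint.mono_right
    (sup_le (hWclosed _) hexact)

theorem isCompl_ker_of_isInternal (hd : ∀ i, (d (i + 1)).comp (d i) = 0)
    (hWclosed : ∀ i, W i ≤ ker (d i))
    (hdirect : ∀ i, DirectSum.IsInternal ![W (i + 1), range (d i), M (i + 1)])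
    (hWsurj : ∀ i, ker (d (i + 1)) ≤ W (i + 1) ⊔ range (d i)) :
    ∀ i, IsCompl (M i) (ker (d i)) := by
  refine forall_int_iff_forall_add_one.2 fun j => ?_
  have hker : ker (d (j + 1)) = W (j + 1) ⊔ range (d j) :=
    (hWsurj j).antisymm (sup_le (hWclosed _) (range_le_ker_iff.2 (hd j)))
  rw [hker]
  exact (isCompl_sup_of_isInternal_fin_three (hdirect j)).2.2

-- The complement of `W i` involves the incoming differential, which is only available in a degree
-- of the form `j + 1`; hence `f` is specified there and transported to all degrees.
theorem exists_projectionOnto_of_isCompl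
    (hW : ∀ i, IsCompl (W (i + 1)) (range (d i) ⊔ M (i + 1))) :
    ∃ f : ∀ i, V i →ₗ[R] W i,
      (∀ i, f (i + 1) = (W (i + 1)).projectionOnto _ (hW i)) ∧
      (∀ i (w : W i), f i w = w) ∧ (∀ i, ∀ x ∈ M i, f i x = 0) ∧
      ∀ i x, f (i + 1) (d i x) = 0 := by
  obtain ⟨f, hf⟩ := exists_forall_add_one_eq (T := fun i => V i →ₗ[R] W i)
    fun i => (W (i + 1)).projectionOnto _ (hW i)
  refine ⟨f, hf, forall_int_iff_forall_add_one.2 fun j w => ?_,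
    forall_int_iff_forall_add_one.2 fun j x hx => ?_, fun i x => ?_⟩
  · rw [hf, Submodule.projectionOnto_apply_left]
  · rw [hf, Submodule.projectionOnto_apply_eq_zero_iff]
    exact Submodule.mem_sup_right hx
  · rw [hf, Submodule.projectionOnto_apply_eq_zero_iff]
    exact Submodule.mem_sup_left (mem_range_self _ x)

end Complexes

theorem stmt_0_general {R : Type*} [Ring R]
    (V : ℤ → Type*) [∀ i, AddCommGroup (V i)] [∀ i, Module R (V i)]
    (d : ∀ i, V i →ₗ[R] V (i + 1))
    (hd : ∀ i, (d (i + 1)).comp (d i) = 0)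
    (W M : ∀ i, Submodule R (V i))
    (hWclosed : ∀ i, W i ≤ ker (d i))
    (hdirect : ∀ i, DirectSum.IsInternal ![W (i + 1), (M i).map (d i), M (i + 1)])
    (hWsurj : ∀ i, ker (d (i + 1)) ≤ W (i + 1) ⊔ range (d i)) :
    ∃ (f : ∀ i, V i →ₗ[R] W i) (g : ∀ i, W i →ₗ[R] V i)
      (h : ∀ i, V (i + 1) →ₗ[R] V i),
      (∀ i, (f (i + 1)).comp (d i) = 0) ∧
      (∀ i, (d i).comp (g i) = 0) ∧
      (∀ i, (f i).comp (g i) = LinearMap.id) ∧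
      (∀ i, (g (i + 1)).comp (f (i + 1)) - LinearMap.id
          = (d i).comp (h i) + (h (i + 1)).comp (d (i + 1))) ∧
      (∀ i, (f i).comp (h i) = 0) ∧
      (∀ i, (h i).comp (g (i + 1)) = 0) ∧
      (∀ i, (h i).comp (h (i + 1)) = 0) ∧
      (∀ i, g i = (W i).subtype) ∧
      (∀ i, ∀ x ∈ M i, f i x = 0) ∧
      (∀ i, ∀ x ∈ M i, f (i + 1) (d i x) = 0) := by
  simp only [map_eq_range_of_isInternal hd hWclosed hdirect] at hdirect
  have hker := isCompl_ker_of_isInternal hd hWclosed hdirect hWsurj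
  choose hW hrange _ using fun i => isCompl_sup_of_isInternal_fin_three (hdirect i)
  obtain ⟨f, hf, hfW, hfM, hfd⟩ := exists_projectionOnto_of_isCompl hW
  let s i := generalizedInverse (d i) (hker i) (hrange i)
  have hsM i x : s i x ∈ M i := generalizedInverse_mem ..
  have hs i x (hx : x ∈ M (i + 1) ⊔ W (i + 1)) : s i x = 0 :=
    generalizedInverse_apply_of_mem _ _ _ hx
  have homotopy i x : (f (i + 1) x : V (i + 1)) - x = -d i (s i x) - s (i + 1) (d (i + 1) x) := by
    rw [hf]
    exact projection_sub_self_eq_neg_generalizedInverse (d i) (d (i + 1)) (hker i) (hrange i)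
      (hker (i + 1)) (hrange (i + 1)) (hW i)
      (sup_le (hWclosed _) (range_le_ker_iff.2 (hd i))) x
  refine ⟨f, fun i => (W i).subtype, fun i => -s i, fun i => ext (hfd i),
    fun i => ext fun w => hWclosed i w.2, fun i => ext (hfW i), fun i => ext fun x => ?_,
    fun i => ext fun x => ?_, fun i => ext fun w => ?_, fun i => ext fun x => ?_,
    fun _ => rfl, hfM, fun i x _ => hfd i x⟩
  · simpa [sub_eq_add_neg] using homotopy i x
  · exact hfM i _ (neg_mem (hsM i x))
  · exact neg_eq_zero.2 (hs i w (Submodule.mem_sup_right w.2))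
  · exact neg_eq_zero.2 (hs i _ (Submodule.mem_sup_left (neg_mem (hsM (i + 1) x))))

theorem stmt_0
    (V : ℤ → Type) [∀ i, AddCommGroup (V i)] [∀ i, Module ℂ (V i)]
    (d : ∀ i, V i →ₗ[ℂ] V (i + 1))
    (hd : ∀ i, (d (i + 1)).comp (d i) = 0)
    (W M : ∀ i, Submodule ℂ (V i))
    -- every element of `W` is closed
    (hWclosed : ∀ i, W i ≤ LinearMap.ker (d i))
    -- internal direct sum `V = W ⊕ d 𝓜 ⊕ 𝓜` (in every degree)
    (hdirect : ∀ i, DirectSum.IsInternal ![W (i + 1), (M i).map (d i), M (i + 1)])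
    -- `W` maps isomorphically onto cohomology
    (hWinj : ∀ i, W (i + 1) ⊓ LinearMap.range (d i) = ⊥)
    (hWsurj : ∀ i, LinearMap.ker (d (i + 1)) ≤ W (i + 1) ⊔ LinearMap.range (d i))
    -- `𝓜` contains no exact elements except `0`
    (hM : ∀ i, M (i + 1) ⊓ LinearMap.range (d i) = ⊥) :
    ∃ (f : ∀ i, V i →ₗ[ℂ] W i) (g : ∀ i, W i →ₗ[ℂ] V i)
      (h : ∀ i, V (i + 1) →ₗ[ℂ] V i),
      -- `f` is a cochain map (to the complex `W` with zero differential)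
      (∀ i, (f (i + 1)).comp (d i) = 0) ∧
      -- `g` is a cochain map
      (∀ i, (d i).comp (g i) = 0) ∧
      -- `f ∘ g = id_W`
      (∀ i, (f i).comp (g i) = LinearMap.id) ∧
      -- `h` is a homotopy between `g ∘ f` and `id_V`
      (∀ i, (g (i + 1)).comp (f (i + 1)) - LinearMap.id
          = (d i).comp (h i) + (h (i + 1)).comp (d (i + 1))) ∧
      -- side conditions
      (∀ i, (f i).comp (h i) = 0) ∧
      (∀ i, (h i).comp (g (i + 1)) = 0) ∧
      (∀ i, (h i).comp (h (i + 1)) = 0) ∧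
      -- moreover, `g` may be taken to be the inclusion of `W` into `V`
      (∀ i, g i = (W i).subtype) ∧
      -- and `f` the projection onto `W` along `d(𝓜) ⊕ 𝓜`
      (∀ i, ∀ x ∈ M i, f i x = 0) ∧
      (∀ i, ∀ x ∈ M i, f (i + 1) (d i x) = 0) :=
  stmt_0_general V d hd W M hWclosed hdirect hWsurj
end

section
/- Let (V, d_V) be a cochain complex of ℂ-vector spaces and let (W, 0) be a cochain complex with zero differential. Suppose given cochain maps f : V → W and g : W → V with f ∘ g = id_W and a homotopy h between g ∘ f and id_V satisfying the side conditions f ∘ h = 0, h ∘ g = 0 and h ∘ h = 0. Then the graded subspaces W' and 𝓜 of V defined by W'^i := g(W^i) and 𝓜^i := h(V^{i+1}) form a Hodge type decomposition of (V, d_V); in particular V^i = g(W^i) ⊕ d_V(h(V^i)) ⊕ h(V^{i+1}) as an internal direct sum for every i. -/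
/-!
STATEMENT 1: Given a cochain complex `(V, d)` of `ℂ`-vector spaces, a complex `(W, 0)`
with zero differential, cochain maps `f : V → W`, `g : W → V` with `f ∘ g = id_W` and a
homotopy `h` between `g ∘ f` and `id_V` satisfying the side conditions, the graded
subspaces `W' := g(W)` and `𝓜 := h(V)` form a Hodge type decomposition of `(V, d)`.
-/

/-!
The homotopy relation reads `id = g ∘ f - d ∘ h - h ∘ d`, and by `d ∘ d = 0`, the cochain map
equations and the side conditions all products of two different summands vanish. Hence `g ∘ f`,
`-(d ∘ h)` and `-(h ∘ d)` form a complete system of orthogonal idempotents, and `V` is the direct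
sum of their images. The last image is all of `h(V)` because `h ∘ d ∘ h = -h`.
-/

open LinearMap

section Idempotents

variable {R M ι : Type*} [Ring R] [AddCommGroup M] [Module R M] [Fintype ι] [DecidableEq ι]

theorem isInternal_range_of_completeOrthogonalIdempotents {p : ι → Module.End R M}
    (hp : CompleteOrthogonalIdempotents p) : DirectSum.IsInternal fun i => range (p i) := by
  refine DirectSum.isInternal_submodule_of_iSupIndep_of_iSup_eq_top (fun i => ?_)
    (eq_top_iff.2 fun x _ => ?_)
  · have others_le_ker : ⨆ j, ⨆ _ : j ≠ i, range (p j) ≤ ker (p i) :=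
      iSup₂_le fun j hji => range_le_ker_iff.2 (hp.ortho hji.symm)
    exact (IsIdempotentElem.isCompl (hp.idem i)).disjoint.mono_right others_le_ker
  · have sum_eq_self : ∑ i, p i x = x := by
      rw [← LinearMap.sum_apply, hp.complete, Module.End.one_apply]
    rw [← sum_eq_self]
    exact sum_mem fun i _ => Submodule.mem_iSup_of_mem i (mem_range_self (p i) x)

end Idempotents

section ThreeTerms

variable {R A B C H : Type*} [Ring R]
  [AddCommGroup A] [Module R A] [AddCommGroup B] [Module R B]
  [AddCommGroup C] [Module R C] [AddCommGroup H] [Module R H]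
  {d₀ : A →ₗ[R] B} {d₁ : B →ₗ[R] C} {h₀ : B →ₗ[R] A} {h₁ : C →ₗ[R] B}
  {f : B →ₗ[R] H} {g : H →ₗ[R] B}

theorem disjoint_range_ker_of_comp_eq_id (hfg : f ∘ₗ g = LinearMap.id) :
    Disjoint (range g) (ker f) := by
  rw [Submodule.disjoint_def]
  rintro _ ⟨w, rfl⟩ hw
  have w_eq_zero : w = 0 := (LinearMap.congr_fun hfg w).symm.trans hw
  rw [w_eq_zero, map_zero]

theorem eq_sub_sub_of_homotopy (hh : g ∘ₗ f - LinearMap.id = d₀ ∘ₗ h₀ + h₁ ∘ₗ d₁) (x : B) :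
    x = g (f x) - d₀ (h₀ x) - h₁ (d₁ x) := by
  have hx : g (f x) - x = d₀ (h₀ x) + h₁ (d₁ x) := LinearMap.congr_fun hh x
  rw [sub_sub, ← hx, sub_sub_cancel]

theorem ker_le_range_sup_range_of_homotopy (hh : g ∘ₗ f - LinearMap.id = d₀ ∘ₗ h₀ + h₁ ∘ₗ d₁) :
    ker d₁ ≤ range g ⊔ range d₀ := by
  intro x hx
  rw [eq_sub_sub_of_homotopy hh x, mem_ker.1 hx, map_zero, sub_zero]
  exact Submodule.sub_mem_sup (mem_range_self g _) (mem_range_self d₀ _)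

theorem homotopy_comp_differential_comp_homotopy (hh : g ∘ₗ f - LinearMap.id = d₀ ∘ₗ h₀ + h₁ ∘ₗ d₁)
    (hfh : f ∘ₗ h₁ = 0) (hhh : h₀ ∘ₗ h₁ = 0) : h₁ ∘ₗ d₁ ∘ₗ h₁ = -h₁ := by
  ext y
  have hfy : f (h₁ y) = 0 := LinearMap.congr_fun hfh y
  have hhy : h₀ (h₁ y) = 0 := LinearMap.congr_fun hhh y
  have hy := eq_sub_sub_of_homotopy hh (h₁ y)
  rw [hfy, hhy, map_zero, map_zero, sub_zero, zero_sub] at hy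
  exact (neg_eq_iff_eq_neg.2 hy).symm

theorem disjoint_range_ker_of_comp_comp_eq_neg (hhdh : h₁ ∘ₗ d₁ ∘ₗ h₁ = -h₁) :
    Disjoint (range h₁) (ker d₁) := by
  rw [Submodule.disjoint_def]
  rintro _ ⟨y, rfl⟩ hy
  have neg_h_eq_zero : -h₁ y = 0 := by
    rw [← LinearMap.neg_apply, ← hhdh, comp_apply, comp_apply, mem_ker.1 hy, map_zero]
  exact neg_eq_zero.1 neg_h_eq_zero

theorem range_neg_comp_of_comp_comp_eq_neg (hhdh : h₁ ∘ₗ d₁ ∘ₗ h₁ = -h₁) :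
    range (-(h₁ ∘ₗ d₁)) = range h₁ := by
  rw [range_neg]
  refine le_antisymm (range_comp_le_range d₁ h₁) ?_
  rw [← range_neg h₁, ← hhdh, ← comp_assoc]
  exact range_comp_le_range h₁ (h₁ ∘ₗ d₁)

theorem completeOrthogonalIdempotents_of_homotopy (hdd : d₁ ∘ₗ d₀ = 0)
    (hfd : f ∘ₗ d₀ = 0) (hdg : d₁ ∘ₗ g = 0) (hh : g ∘ₗ f - LinearMap.id = d₀ ∘ₗ h₀ + h₁ ∘ₗ d₁)
    (hfh : f ∘ₗ h₁ = 0) (hhg : h₀ ∘ₗ g = 0) (hhh : h₀ ∘ₗ h₁ = 0) :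
    CompleteOrthogonalIdempotents
      (![g ∘ₗ f, -(d₀ ∘ₗ h₀), -(h₁ ∘ₗ d₁)] : Fin 3 → Module.End R B) := by
  have hdd' (x : A) : d₁ (d₀ x) = 0 := LinearMap.congr_fun hdd x
  have hfd' (x : A) : f (d₀ x) = 0 := LinearMap.congr_fun hfd x
  have hdg' (w : H) : d₁ (g w) = 0 := LinearMap.congr_fun hdg w
  have hfh' (y : C) : f (h₁ y) = 0 := LinearMap.congr_fun hfh y
  have hhg' (w : H) : h₀ (g w) = 0 := LinearMap.congr_fun hhg w
  have hhh' (y : C) : h₀ (h₁ y) = 0 := LinearMap.congr_fun hhh y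
  refine CompleteOrthogonalIdempotents.iff_ortho_complete.2 ⟨fun i j hij => ?_, ?_⟩
  · ext x
    fin_cases i <;> fin_cases j <;>
      first
      | exact absurd rfl hij
      | simp [hdd', hfd', hdg', hfh', hhg', hhh']
  · ext x
    simpa [Fin.sum_univ_three, sub_eq_add_neg] using (eq_sub_sub_of_homotopy hh x).symm

theorem isInternal_of_homotopy (hdd : d₁ ∘ₗ d₀ = 0)
    (hfd : f ∘ₗ d₀ = 0) (hdg : d₁ ∘ₗ g = 0) (hfg : f ∘ₗ g = LinearMap.id)
    (hh : g ∘ₗ f - LinearMap.id = d₀ ∘ₗ h₀ + h₁ ∘ₗ d₁)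
    (hfh : f ∘ₗ h₁ = 0) (hhg : h₀ ∘ₗ g = 0) (hhh : h₀ ∘ₗ h₁ = 0) :
    DirectSum.IsInternal ![range g, (range h₀).map d₀, range h₁] := by
  have range_gf : range (g ∘ₗ f) = range g :=
    range_comp_of_range_eq_top g (range_eq_top.2 (surjective_of_comp_eq_id g f hfg))
  have range_dh : range (-(d₀ ∘ₗ h₀)) = (range h₀).map d₀ := by rw [range_neg, range_comp]
  have range_hd : range (-(h₁ ∘ₗ d₁)) = range h₁ :=
    range_neg_comp_of_comp_comp_eq_neg (homotopy_comp_differential_comp_homotopy hh hfh hhh)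
  convert isInternal_range_of_completeOrthogonalIdempotents
    (completeOrthogonalIdempotents_of_homotopy hdd hfd hdg hh hfh hhg hhh) using 1
  rw [← range_gf, ← range_dh, ← range_hd]
  ext1 i
  fin_cases i <;> rfl

end ThreeTerms

theorem stmt_1_general {R ι : Type*} [Ring R] [Add ι] [One ι]
    (V : ι → Type*) [∀ i, AddCommGroup (V i)] [∀ i, Module R (V i)]
    (d : ∀ i, V i →ₗ[R] V (i + 1))
    (hd : ∀ i, (d (i + 1)).comp (d i) = 0)
    (W : ι → Type*) [∀ i, AddCommGroup (W i)] [∀ i, Module R (W i)]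
    (f : ∀ i, V i →ₗ[R] W i) (g : ∀ i, W i →ₗ[R] V i)
    (h : ∀ i, V (i + 1) →ₗ[R] V i)
    (hf : ∀ i, (f (i + 1)).comp (d i) = 0)
    (hg : ∀ i, (d i).comp (g i) = 0)
    (hfg : ∀ i, (f i).comp (g i) = LinearMap.id)
    (hh : ∀ i, (g (i + 1)).comp (f (i + 1)) - LinearMap.id
        = (d i).comp (h i) + (h (i + 1)).comp (d (i + 1)))
    (hfh : ∀ i, (f i).comp (h i) = 0)
    (hhg : ∀ i, (h i).comp (g (i + 1)) = 0)
    (hhh : ∀ i, (h i).comp (h (i + 1)) = 0) :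
    (∀ i, range (g i) ≤ ker (d i)) ∧
    (∀ i, DirectSum.IsInternal
      ![range (g (i + 1)), (range (h i)).map (d i), range (h (i + 1))]) ∧
    (∀ i, range (g (i + 1)) ⊓ range (d i) = ⊥) ∧
    (∀ i, ker (d (i + 1)) ≤ range (g (i + 1)) ⊔ range (d i)) ∧
    (∀ i, range (h (i + 1)) ⊓ range (d i) = ⊥) := by
  refine ⟨fun i => range_le_ker_iff.2 (hg i), fun i => ?_, fun i => disjoint_iff.1 ?_,
    fun i => ker_le_range_sup_range_of_homotopy (hh i), fun i => disjoint_iff.1 ?_⟩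
  · exact isInternal_of_homotopy (hd i) (hf i) (hg (i + 1)) (hfg (i + 1)) (hh i) (hfh (i + 1))
      (hhg i) (hhh i)
  · exact (disjoint_range_ker_of_comp_eq_id (hfg (i + 1))).mono_right (range_le_ker_iff.2 (hf i))
  · have hhdh := homotopy_comp_differential_comp_homotopy (hh i) (hfh (i + 1)) (hhh i)
    exact (disjoint_range_ker_of_comp_comp_eq_neg hhdh).mono_right (range_le_ker_iff.2 (hd i))

theorem stmt_1
    (V : ℤ → Type) [∀ i, AddCommGroup (V i)] [∀ i, Module ℂ (V i)]
    (d : ∀ i, V i →ₗ[ℂ] V (i + 1))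
    (hd : ∀ i, (d (i + 1)).comp (d i) = 0)
    (W : ℤ → Type) [∀ i, AddCommGroup (W i)] [∀ i, Module ℂ (W i)]
    (f : ∀ i, V i →ₗ[ℂ] W i) (g : ∀ i, W i →ₗ[ℂ] V i)
    (h : ∀ i, V (i + 1) →ₗ[ℂ] V i)
    -- `f` and `g` are cochain maps (the differential of `W` is zero)
    (hf : ∀ i, (f (i + 1)).comp (d i) = 0)
    (hg : ∀ i, (d i).comp (g i) = 0)
    -- `f ∘ g = id_W`
    (hfg : ∀ i, (f i).comp (g i) = LinearMap.id)
    -- `h` is a homotopy between `g ∘ f` and `id_V`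
    (hh : ∀ i, (g (i + 1)).comp (f (i + 1)) - LinearMap.id
        = (d i).comp (h i) + (h (i + 1)).comp (d (i + 1)))
    -- side conditions
    (hfh : ∀ i, (f i).comp (h i) = 0)
    (hhg : ∀ i, (h i).comp (g (i + 1)) = 0)
    (hhh : ∀ i, (h i).comp (h (i + 1)) = 0) :
    -- `(g(W), h(V))` is a Hodge type decomposition of `(V, d)`:
    -- every element of `g(W)` is closed
    (∀ i, LinearMap.range (g i) ≤ LinearMap.ker (d i)) ∧
    -- internal direct sum `V = g(W) ⊕ d(h(V)) ⊕ h(V)` (in every degree)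
    (∀ i, DirectSum.IsInternal
      ![LinearMap.range (g (i + 1)), (LinearMap.range (h i)).map (d i),
        LinearMap.range (h (i + 1))]) ∧
    -- `g(W)` maps isomorphically onto cohomology
    (∀ i, LinearMap.range (g (i + 1)) ⊓ LinearMap.range (d i) = ⊥) ∧
    (∀ i, LinearMap.ker (d (i + 1)) ≤ LinearMap.range (g (i + 1)) ⊔ LinearMap.range (d i)) ∧
    -- `h(V)` contains no exact elements except `0`
    (∀ i, LinearMap.range (h (i + 1)) ⊓ LinearMap.range (d i) = ⊥) :=
  stmt_1_general V d hd W f g h hf hg hfg hh hfh hhg hhh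
end

section
/- Let (V, d_V) and (W, d_W) be cochain complexes of ℂ-vector spaces, and let f : V → W and g : W → V be cochain maps with f ∘ g = id_W such that g ∘ f is homotopic to id_V (i.e. there exists some homotopy h₀ with g ∘ f − id_V = d_V ∘ h₀ + h₀ ∘ d_V). Then there exists a homotopy h between g ∘ f and id_V satisfying the side conditions f ∘ h = 0, h ∘ g = 0 and h ∘ h = 0. -/
/-!
Write `φ = g ∘ f - id`. It is a cochain map with `f ∘ φ = 0`, `φ ∘ g = 0` and `φ ∘ φ = -φ`, so
`k = φ ∘ h₀ ∘ φ` satisfies `d ∘ k + k ∘ d = φ ∘ φ ∘ φ = φ`, with `f ∘ k = 0` and `k ∘ g = 0`.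
From `φ ∘ k = -k = k ∘ φ` one gets two expressions for `k ∘ d ∘ k`, and comparing them shows that
`k ∘ k` commutes with `d`. Hence `h = -k ∘ d ∘ k` is still a homotopy, and
`h ∘ h = k ∘ d ∘ (k ∘ k) ∘ d ∘ k = k ∘ (k ∘ k) ∘ d ∘ d ∘ k = 0`.
-/

section Definitions

variable {R : Type*} [Ring R]
  {V W : ℤ → Type*} [∀ i, AddCommGroup (V i)] [∀ i, Module R (V i)]
  [∀ i, AddCommGroup (W i)] [∀ i, Module R (W i)]

/-- A degree-`0` family of linear maps commuting with the differentials. -/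
def IsCochainMap (dV : ∀ i, V i →ₗ[R] V (i + 1)) (dW : ∀ i, W i →ₗ[R] W (i + 1))
    (f : ∀ i, V i →ₗ[R] W i) : Prop :=
  ∀ i, f (i + 1) ∘ₗ dV i = dW i ∘ₗ f i

/-- `h` is a homotopy from `φ` to `0`, so that a homotopy between `φ` and `ψ` is a null-homotopy of
`φ - ψ`. The component `h i` starts in degree `i + 1`, and the homotopy relation is imposed in
degree `i + 1` for every integer `i`, which avoids transport along `i - 1 + 1 = i`. -/
def IsNullHomotopy (dV : ∀ i, V i →ₗ[R] V (i + 1)) (dW : ∀ i, W i →ₗ[R] W (i + 1))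
    (φ : ∀ i, V i →ₗ[R] W i) (h : ∀ i, V (i + 1) →ₗ[R] W i) : Prop :=
  ∀ i, φ (i + 1) = dW i ∘ₗ h i + h (i + 1) ∘ₗ dV (i + 1)

end Definitions

section Composition

variable {R : Type*} [Ring R]
  {U V W X : ℤ → Type*} [∀ i, AddCommGroup (U i)] [∀ i, Module R (U i)]
  [∀ i, AddCommGroup (V i)] [∀ i, Module R (V i)]
  [∀ i, AddCommGroup (W i)] [∀ i, Module R (W i)]
  [∀ i, AddCommGroup (X i)] [∀ i, Module R (X i)]
  {dU : ∀ i, U i →ₗ[R] U (i + 1)} {dV : ∀ i, V i →ₗ[R] V (i + 1)}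
  {dW : ∀ i, W i →ₗ[R] W (i + 1)} {dX : ∀ i, X i →ₗ[R] X (i + 1)}

theorem IsCochainMap.id : IsCochainMap dV dV fun _ ↦ LinearMap.id :=
  fun _ ↦ rfl

theorem IsCochainMap.comp {a : ∀ i, V i →ₗ[R] W i} {b : ∀ i, U i →ₗ[R] V i}
    (ha : IsCochainMap dV dW a) (hb : IsCochainMap dU dV b) :
    IsCochainMap dU dW fun i ↦ a i ∘ₗ b i := fun i ↦ by
  rw [LinearMap.comp_assoc, hb i, ← LinearMap.comp_assoc, ha i, LinearMap.comp_assoc]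

theorem IsCochainMap.sub {a b : ∀ i, V i →ₗ[R] W i}
    (ha : IsCochainMap dV dW a) (hb : IsCochainMap dV dW b) :
    IsCochainMap dV dW fun i ↦ a i - b i := fun i ↦ by
  rw [LinearMap.sub_comp, LinearMap.comp_sub, ha i, hb i]

theorem IsNullHomotopy.comp_comp {φ : ∀ i, V i →ₗ[R] W i} {h : ∀ i, V (i + 1) →ₗ[R] W i}
    {a : ∀ i, W i →ₗ[R] X i} {b : ∀ i, U i →ₗ[R] V i} (hφ : IsNullHomotopy dV dW φ h)
    (ha : IsCochainMap dW dX a) (hb : IsCochainMap dU dV b) :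
    IsNullHomotopy dU dX (fun i ↦ a i ∘ₗ φ i ∘ₗ b i) fun i ↦ a i ∘ₗ h i ∘ₗ b (i + 1) := fun i ↦ by
  calc a (i + 1) ∘ₗ φ (i + 1) ∘ₗ b (i + 1)
      = (a (i + 1) ∘ₗ dW i) ∘ₗ h i ∘ₗ b (i + 1)
          + a (i + 1) ∘ₗ h (i + 1) ∘ₗ dV (i + 1) ∘ₗ b (i + 1) := by
        simp only [hφ i, LinearMap.add_comp, LinearMap.comp_add, LinearMap.comp_assoc]
    _ = dX i ∘ₗ a i ∘ₗ h i ∘ₗ b (i + 1)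
          + (a (i + 1) ∘ₗ h (i + 1) ∘ₗ b (i + 1 + 1)) ∘ₗ dU (i + 1) := by
        simp only [ha i, ← hb (i + 1), LinearMap.comp_assoc]

end Composition

section SquareZero

variable {R : Type*} [Ring R] {V : ℤ → Type*} [∀ i, AddCommGroup (V i)] [∀ i, Module R (V i)]
  {d : ∀ i, V i →ₗ[R] V (i + 1)} {φ : ∀ i, V i →ₗ[R] V i} {k : ∀ i, V (i + 1) →ₗ[R] V i}

/-- The modification `-k ∘ d ∘ k` of a null-homotopy `k`, which squares to zero when
`φ ∘ k = -k = k ∘ φ` for the map `φ` contracted by `k`. -/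
def squareZeroModification (d : ∀ i, V i →ₗ[R] V (i + 1)) (k : ∀ i, V (i + 1) →ₗ[R] V i) (i : ℤ) :
    V (i + 1) →ₗ[R] V i :=
  -(k i ∘ₗ d i ∘ₗ k i)

namespace IsNullHomotopy

theorem comp_d_comp_eq_of_comp_map (hk : IsNullHomotopy d d φ k)
    (hkφ : ∀ i, k i ∘ₗ φ (i + 1) = -k i) (i : ℤ) :
    k i ∘ₗ d i ∘ₗ k i = -k i - k i ∘ₗ k (i + 1) ∘ₗ d (i + 1) := by
  rw [eq_sub_iff_add_eq, ← LinearMap.comp_add, ← hk i, hkφ i]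

theorem comp_d_comp_eq_of_map_comp (hk : IsNullHomotopy d d φ k)
    (hφk : ∀ i, φ i ∘ₗ k i = -k i) (i : ℤ) :
    k (i + 1) ∘ₗ d (i + 1) ∘ₗ k (i + 1) = -k (i + 1) - d i ∘ₗ k i ∘ₗ k (i + 1) := by
  rw [eq_sub_iff_add_eq', ← hφk (i + 1), hk i, LinearMap.add_comp, LinearMap.comp_assoc,
    LinearMap.comp_assoc]

theorem d_comp_sq (hk : IsNullHomotopy d d φ k) (hφk : ∀ i, φ i ∘ₗ k i = -k i)
    (hkφ : ∀ i, k i ∘ₗ φ (i + 1) = -k i) (i : ℤ) :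
    d i ∘ₗ k i ∘ₗ k (i + 1) = k (i + 1) ∘ₗ k (i + 1 + 1) ∘ₗ d (i + 1 + 1) :=
  sub_right_injective <|
    (hk.comp_d_comp_eq_of_map_comp hφk i).symm.trans (hk.comp_d_comp_eq_of_comp_map hkφ (i + 1))

theorem squareZeroModification_comp_d (hk : IsNullHomotopy d d φ k)
    (hd : ∀ i, d (i + 1) ∘ₗ d i = 0) (hkφ : ∀ i, k i ∘ₗ φ (i + 1) = -k i) (i : ℤ) :
    squareZeroModification d k (i + 1) ∘ₗ d (i + 1) = k (i + 1) ∘ₗ d (i + 1) := by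
  simp only [squareZeroModification, hk.comp_d_comp_eq_of_comp_map hkφ, LinearMap.neg_comp,
    LinearMap.sub_comp, LinearMap.comp_assoc, hd, LinearMap.comp_zero, sub_zero, neg_neg]

theorem d_comp_squareZeroModification (hk : IsNullHomotopy d d φ k)
    (hd : ∀ i, d (i + 1) ∘ₗ d i = 0) (hφk : ∀ i, φ i ∘ₗ k i = -k i)
    (hkφ : ∀ i, k i ∘ₗ φ (i + 1) = -k i) (i : ℤ) :
    d i ∘ₗ squareZeroModification d k i = d i ∘ₗ k i := by
  have d_comp_sq_comp_d : d i ∘ₗ k i ∘ₗ k (i + 1) ∘ₗ d (i + 1) = 0 :=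
    calc d i ∘ₗ k i ∘ₗ k (i + 1) ∘ₗ d (i + 1)
        = (d i ∘ₗ k i ∘ₗ k (i + 1)) ∘ₗ d (i + 1) := by simp only [LinearMap.comp_assoc]
      _ = k (i + 1) ∘ₗ k (i + 1 + 1) ∘ₗ d (i + 1 + 1) ∘ₗ d (i + 1) := by
        simp only [hk.d_comp_sq hφk hkφ, LinearMap.comp_assoc]
      _ = 0 := by simp only [hd, LinearMap.comp_zero]
  simp only [squareZeroModification, hk.comp_d_comp_eq_of_comp_map hkφ, LinearMap.comp_neg,
    LinearMap.comp_sub, d_comp_sq_comp_d, sub_zero, neg_neg]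

theorem isNullHomotopy_squareZeroModification (hk : IsNullHomotopy d d φ k)
    (hd : ∀ i, d (i + 1) ∘ₗ d i = 0) (hφk : ∀ i, φ i ∘ₗ k i = -k i)
    (hkφ : ∀ i, k i ∘ₗ φ (i + 1) = -k i) :
    IsNullHomotopy d d φ (squareZeroModification d k) := fun i ↦ by
  rw [hk.d_comp_squareZeroModification hd hφk hkφ, hk.squareZeroModification_comp_d hd hkφ, hk i]

theorem squareZeroModification_comp_self (hk : IsNullHomotopy d d φ k)
    (hd : ∀ i, d (i + 1) ∘ₗ d i = 0) (hφk : ∀ i, φ i ∘ₗ k i = -k i)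
    (hkφ : ∀ i, k i ∘ₗ φ (i + 1) = -k i) (i : ℤ) :
    squareZeroModification d k i ∘ₗ squareZeroModification d k (i + 1) = 0 :=
  calc squareZeroModification d k i ∘ₗ squareZeroModification d k (i + 1)
      = k i ∘ₗ (d i ∘ₗ k i ∘ₗ k (i + 1)) ∘ₗ d (i + 1) ∘ₗ k (i + 1) := by
        simp only [squareZeroModification, LinearMap.neg_comp, LinearMap.comp_neg, neg_neg,
          LinearMap.comp_assoc]
    _ = k i ∘ₗ k (i + 1) ∘ₗ k (i + 1 + 1) ∘ₗ (d (i + 1 + 1) ∘ₗ d (i + 1)) ∘ₗ k (i + 1) := by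
        simp only [hk.d_comp_sq hφk hkφ, LinearMap.comp_assoc]
    _ = 0 := by simp only [hd, LinearMap.zero_comp, LinearMap.comp_zero]

end IsNullHomotopy

end SquareZero

section Retraction

variable {R M N : Type*} [Ring R] [AddCommGroup M] [Module R M] [AddCommGroup N] [Module R N]
  {f : M →ₗ[R] N} {g : N →ₗ[R] M}

theorem comp_retraction_sub_id (hfg : f ∘ₗ g = LinearMap.id) :
    f ∘ₗ (g ∘ₗ f - LinearMap.id) = 0 := by
  rw [LinearMap.comp_sub, ← LinearMap.comp_assoc, hfg, LinearMap.id_comp, LinearMap.comp_id,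
    sub_self]

theorem retraction_sub_id_comp (hfg : f ∘ₗ g = LinearMap.id) :
    (g ∘ₗ f - LinearMap.id) ∘ₗ g = 0 := by
  rw [LinearMap.sub_comp, LinearMap.comp_assoc, hfg, LinearMap.id_comp, LinearMap.comp_id,
    sub_self]

theorem retraction_sub_id_comp_self (hfg : f ∘ₗ g = LinearMap.id) :
    (g ∘ₗ f - LinearMap.id) ∘ₗ (g ∘ₗ f - LinearMap.id) = -(g ∘ₗ f - LinearMap.id) := by
  rw [LinearMap.sub_comp, LinearMap.comp_assoc, comp_retraction_sub_id hfg, LinearMap.comp_zero,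
    LinearMap.id_comp, zero_sub]

end Retraction

section SideConditions

variable {R : Type*} [Ring R]
  {V W : ℤ → Type*} [∀ i, AddCommGroup (V i)] [∀ i, Module R (V i)]
  [∀ i, AddCommGroup (W i)] [∀ i, Module R (W i)]
  {dV : ∀ i, V i →ₗ[R] V (i + 1)} {dW : ∀ i, W i →ₗ[R] W (i + 1)}
  {f : ∀ i, V i →ₗ[R] W i} {g : ∀ i, W i →ₗ[R] V i} {h₀ : ∀ i, V (i + 1) →ₗ[R] V i}

theorem exists_isNullHomotopy_comp_eq_zero
    (hf : IsCochainMap dV dW f) (hg : IsCochainMap dW dV g)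
    (hfg : ∀ i, f i ∘ₗ g i = LinearMap.id)
    (hh₀ : IsNullHomotopy dV dV (fun i ↦ g i ∘ₗ f i - LinearMap.id) h₀) :
    ∃ k : ∀ i, V (i + 1) →ₗ[R] V i,
      IsNullHomotopy dV dV (fun i ↦ g i ∘ₗ f i - LinearMap.id) k ∧
      (∀ i, f i ∘ₗ k i = 0) ∧ ∀ i, k i ∘ₗ g (i + 1) = 0 := by
  let φ : ∀ i, V i →ₗ[R] V i := fun i ↦ g i ∘ₗ f i - LinearMap.id
  have φ_cochain : IsCochainMap dV dV φ := (hg.comp hf).sub .id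
  have φ_cube (i : ℤ) : φ i ∘ₗ φ i ∘ₗ φ i = φ i := by
    simp only [φ, retraction_sub_id_comp_self (hfg i), LinearMap.comp_neg, neg_neg]
  refine ⟨fun i ↦ φ i ∘ₗ h₀ i ∘ₗ φ (i + 1), ?_, fun i ↦ ?_, fun i ↦ ?_⟩
  · simpa only [φ_cube] using IsNullHomotopy.comp_comp (φ := φ) hh₀ φ_cochain φ_cochain
  · rw [← LinearMap.comp_assoc, comp_retraction_sub_id (hfg i), LinearMap.zero_comp]
  · simp only [φ, LinearMap.comp_assoc, retraction_sub_id_comp (hfg (i + 1)), LinearMap.comp_zero]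

theorem stmt_2_general (hdV : ∀ i, dV (i + 1) ∘ₗ dV i = 0)
    (hf : IsCochainMap dV dW f) (hg : IsCochainMap dW dV g)
    (hfg : ∀ i, f i ∘ₗ g i = LinearMap.id)
    (hh₀ : IsNullHomotopy dV dV (fun i ↦ g i ∘ₗ f i - LinearMap.id) h₀) :
    ∃ h : ∀ i, V (i + 1) →ₗ[R] V i,
      IsNullHomotopy dV dV (fun i ↦ g i ∘ₗ f i - LinearMap.id) h ∧
      (∀ i, f i ∘ₗ h i = 0) ∧ (∀ i, h i ∘ₗ g (i + 1) = 0) ∧ ∀ i, h i ∘ₗ h (i + 1) = 0 := by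
  obtain ⟨k, hk, hfk, hkg⟩ := exists_isNullHomotopy_comp_eq_zero hf hg hfg hh₀
  have hφk (i : ℤ) : (g i ∘ₗ f i - LinearMap.id) ∘ₗ k i = -k i := by
    rw [LinearMap.sub_comp, LinearMap.comp_assoc, hfk, LinearMap.comp_zero, LinearMap.id_comp,
      zero_sub]
  have hkφ (i : ℤ) : k i ∘ₗ (g (i + 1) ∘ₗ f (i + 1) - LinearMap.id) = -k i := by
    rw [LinearMap.comp_sub, ← LinearMap.comp_assoc, hkg, LinearMap.zero_comp, LinearMap.comp_id,
      zero_sub]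
  refine ⟨squareZeroModification dV k, hk.isNullHomotopy_squareZeroModification hdV hφk hkφ,
    fun i ↦ ?_, fun i ↦ ?_, hk.squareZeroModification_comp_self hdV hφk hkφ⟩
  · rw [squareZeroModification, LinearMap.comp_neg, ← LinearMap.comp_assoc, hfk,
      LinearMap.zero_comp, neg_zero]
  · simp only [squareZeroModification, LinearMap.neg_comp, LinearMap.comp_assoc, hkg,
      LinearMap.comp_zero, neg_zero]

end SideConditions

theorem stmt_2
    (V : ℤ → Type) [∀ i, AddCommGroup (V i)] [∀ i, Module ℂ (V i)]
    (dV : ∀ i, V i →ₗ[ℂ] V (i + 1))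
    (hdV : ∀ i, (dV (i + 1)).comp (dV i) = 0)
    (W : ℤ → Type) [∀ i, AddCommGroup (W i)] [∀ i, Module ℂ (W i)]
    (dW : ∀ i, W i →ₗ[ℂ] W (i + 1))
    (hdW : ∀ i, (dW (i + 1)).comp (dW i) = 0)
    (f : ∀ i, V i →ₗ[ℂ] W i) (g : ∀ i, W i →ₗ[ℂ] V i)
    -- `f` and `g` are cochain maps
    (hf : ∀ i, (f (i + 1)).comp (dV i) = (dW i).comp (f i))
    (hg : ∀ i, (g (i + 1)).comp (dW i) = (dV i).comp (g i))
    -- `f ∘ g = id_W`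
    (hfg : ∀ i, (f i).comp (g i) = LinearMap.id)
    -- `g ∘ f` is homotopic to `id_V` via some homotopy `h₀`
    (h₀ : ∀ i, V (i + 1) →ₗ[ℂ] V i)
    (hh₀ : ∀ i, (g (i + 1)).comp (f (i + 1)) - LinearMap.id
        = (dV i).comp (h₀ i) + (h₀ (i + 1)).comp (dV (i + 1))) :
    -- then there is a homotopy `h` between `g ∘ f` and `id_V` with the side conditions
    ∃ h : ∀ i, V (i + 1) →ₗ[ℂ] V i,
      (∀ i, (g (i + 1)).comp (f (i + 1)) - LinearMap.id
          = (dV i).comp (h i) + (h (i + 1)).comp (dV (i + 1))) ∧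
      (∀ i, (f i).comp (h i) = 0) ∧
      (∀ i, (h i).comp (g (i + 1)) = 0) ∧
      (∀ i, (h i).comp (h (i + 1)) = 0) := by
  exact stmt_2_general hdV hf hg hfg hh₀
end

section
/- Fix τ ∈ ℂ with Im τ > 0 and let Λ := { m + n·τ : m, n ∈ ℤ }. Let f : ℕ → (ℂ → ℂ) be a family of functions, each holomorphic on ℂ ∖ Λ, such that for all ξ ∈ ℂ ∖ Λ, all n ∈ ℕ and all l ∈ ℤ: f 0 ξ = 1, f n (ξ + l) = f n ξ, and f n (ξ + l·τ) = Σ_{j=0}^{n} f (n−j) ξ · (−2πi l)^j / j!. Then the family { f n }_{n ∈ ℕ}, regarded as functions on ℂ ∖ Λ, is linearly independent over ℂ: if a finitely supported family of scalars λ : ℕ → ℂ satisfies Σ_n λ_n · f n ξ = 0 for all ξ ∈ ℂ ∖ Λ, then λ_n = 0 for all n. -/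
/-!
STATEMENT 4: A family of holomorphic functions on `ℂ ∖ (ℤ + τℤ)` satisfying the
quasi-periodicity conditions (2.1) is linearly independent over `ℂ`.
-/

open Complex

/-!
Along the orbit `ξ + lτ`, `l ∈ ℤ`, of a point `ξ` off the lattice, the quasi-periodicity law says
that `f n (ξ + lτ)` is the value at `-2πi l` of a polynomial whose coefficient of `X ^ n` is
`f 0 ξ / n! = 1 / n!`, hence of degree exactly `n`. Polynomials of pairwise distinct degrees are
linearly independent, and a polynomial is determined by its values at the infinitely many points
`-2πi l`, so the `f n` are already linearly independent on a single orbit.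
-/

section Polynomials

open Polynomial

theorem linearIndependent_eval_of_infinite_range {R ι κ : Type*} [CommRing R] [IsDomain R]
    {t : ι → R} (ht : (Set.range t).Infinite) {p : κ → R[X]} (hp : LinearIndependent R p) :
    LinearIndependent R fun k i ↦ (p k).eval (t i) := by
  refine hp.map' (LinearMap.pi fun i ↦ leval (t i)) (LinearMap.ker_eq_bot'.2 fun q hq ↦ ?_)
  exact q.eq_zero_of_infinite_isRoot <| ht.mono <| Set.range_subset_iff.2 fun i ↦ congrFun hq i

variable {K : Type*} [Field K]

/-- The normalized Appell polynomial `∑ j ≤ n, a (n - j) * X ^ j / j!` with constant term `a n`,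
that is, the coefficient of `z ^ n` in `(∑ m, a m * z ^ m) * exp (X * z)`. These polynomials
describe how a quasi-periodic family of functions varies along an orbit of translations. -/
noncomputable def appell (a : ℕ → K) (n : ℕ) : K[X] :=
  ∑ j ∈ Finset.range (n + 1), C (a (n - j) / (j.factorial : K)) * X ^ j

theorem eval_appell (a : ℕ → K) (n : ℕ) (x : K) :
    (appell a n).eval x =
      ∑ j ∈ Finset.range (n + 1), a (n - j) * x ^ j / (j.factorial : K) := by
  simp only [appell, eval_finsetSum, eval_C_mul, eval_X_pow, div_mul_eq_mul_div]

theorem coeff_appell (a : ℕ → K) (n j : ℕ) :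
    (appell a n).coeff j = if j ≤ n then a (n - j) / (j.factorial : K) else 0 := by
  simp [appell, coeff_X_pow]

variable [CharZero K] {a : ℕ → K}

theorem degree_appell (ha : a 0 ≠ 0) (n : ℕ) : (appell a n).degree = n := by
  refine degree_eq_of_le_of_coeff_ne_zero ((degree_le_iff_coeff_zero _ _).2 fun j hj ↦ ?_) ?_
  · rw [coeff_appell, if_neg (Nat.cast_lt.1 hj).not_ge]
  · simp [coeff_appell, ha, n.factorial_ne_zero]

theorem linearIndependent_appell (ha : a 0 ≠ 0) : LinearIndependent K (appell a) :=
  Sequence.linearIndependent ⟨appell a, degree_appell ha⟩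

end Polynomials

theorem linearIndependent_translates_of_quasiPeriodic {K E : Type*} [Field K] [CharZero K]
    [AddGroup E] {f : ℕ → E → K} {ξ τ : E} {c : K} (hc : c ≠ 0) (h0 : f 0 ξ ≠ 0)
    (hqper : ∀ (n : ℕ) (l : ℤ), f n (ξ + l • τ) =
      ∑ j ∈ Finset.range (n + 1), f (n - j) ξ * (c * l) ^ j / (j.factorial : K)) :
    LinearIndependent K fun n (l : ℤ) ↦ f n (ξ + l • τ) := by
  have multiples_infinite : (Set.range fun l : ℤ ↦ c * l).Infinite :=
    Set.infinite_range_of_injective <| (mul_right_injective₀ hc).comp Int.cast_injective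
  simpa only [hqper, eval_appell] using linearIndependent_eval_of_infinite_range multiples_infinite
    (linearIndependent_appell (a := fun n ↦ f n ξ) h0)

/-- The period lattice `Λ = ℤ + ℤτ`, off which the functions live. It is a bare set, defined for
every `τ : ℂ`, so that membership unfolds to the explicit form `m + kτ`. -/
def periods (τ : ℂ) : Set ℂ := {z | ∃ m k : ℤ, z = (m : ℂ) + (k : ℂ) * τ}

theorem countable_periods (τ : ℂ) : (periods τ).Countable :=
  (Set.countable_range fun p : ℤ × ℤ ↦ (p.1 : ℂ) + (p.2 : ℂ) * τ).mono <| by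
    rintro _ ⟨m, k, rfl⟩
    exact ⟨(m, k), rfl⟩

theorem exists_notMem_periods (τ : ℂ) : ∃ ξ, ξ ∉ periods τ :=
  ((countable_periods τ).dense_compl ℂ).nonempty

theorem add_zsmul_notMem_periods {τ ξ : ℂ} (hξ : ξ ∉ periods τ) (l : ℤ) :
    ξ + l • τ ∉ periods τ := by
  rintro ⟨m, k, h⟩
  refine hξ ⟨m, k - l, ?_⟩
  rw [zsmul_eq_mul] at h
  push_cast
  linear_combination h

theorem stmt_4_general {K : Type*} [Field K] [CharZero K] {τ : ℂ} {f : ℕ → ℂ → K} {c : K}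
    (hc : c ≠ 0) (h0 : ∀ ξ ∉ periods τ, f 0 ξ = 1)
    (hqper : ∀ ξ ∉ periods τ, ∀ (n : ℕ) (l : ℤ), f n (ξ + (l : ℂ) * τ) =
      ∑ j ∈ Finset.range (n + 1), f (n - j) ξ * (c * (l : K)) ^ j / (j.factorial : K)) :
    LinearIndependent K fun n (ξ : ↥(periods τ)ᶜ) ↦ f n ξ := by
  obtain ⟨ξ, hξ⟩ := exists_notMem_periods τ
  let orbit (l : ℤ) : ↥(periods τ)ᶜ := ⟨ξ + l • τ, add_zsmul_notMem_periods hξ l⟩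
  refine LinearIndependent.of_comp (LinearMap.funLeft K K orbit) ?_
  refine linearIndependent_translates_of_quasiPeriodic hc (by simp [h0 ξ hξ]) fun n l ↦ ?_
  rw [zsmul_eq_mul, hqper ξ hξ n l]

theorem stmt_4 (τ : ℂ) (hτ : 0 < τ.im)
    (f : ℕ → ℂ → ℂ)
    -- each `f n` is holomorphic on `ℂ ∖ (ℤ + τℤ)`
    (hol : ∀ n : ℕ, DifferentiableOn ℂ (f n) {z : ℂ | ¬ ∃ m k : ℤ, z = (m : ℂ) + (k : ℂ) * τ})
    -- `f 0 = 1`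
    (h0 : ∀ ξ : ℂ, (¬ ∃ m k : ℤ, ξ = (m : ℂ) + (k : ℂ) * τ) → f 0 ξ = 1)
    -- `f n (ξ + l) = f n ξ`
    (hper : ∀ ξ : ℂ, (¬ ∃ m k : ℤ, ξ = (m : ℂ) + (k : ℂ) * τ) →
      ∀ (n : ℕ) (l : ℤ), f n (ξ + (l : ℂ)) = f n ξ)
    -- `f n (ξ + lτ) = Σ_{j=0}^{n} f (n-j) ξ · (−2πi l)^j / j!`
    (hqper : ∀ ξ : ℂ, (¬ ∃ m k : ℤ, ξ = (m : ℂ) + (k : ℂ) * τ) →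
      ∀ (n : ℕ) (l : ℤ), f n (ξ + (l : ℂ) * τ) =
        ∑ j ∈ Finset.range (n + 1),
          f (n - j) ξ * (-2 * (Real.pi : ℂ) * Complex.I * (l : ℂ)) ^ j / (Nat.factorial j : ℂ))
    -- any finitely supported vanishing linear combination is trivial
    (lam : ℕ →₀ ℂ)
    (hlam : ∀ ξ : ℂ, (¬ ∃ m k : ℤ, ξ = (m : ℂ) + (k : ℂ) * τ) →
      ∑ n ∈ lam.support, lam n * f n ξ = 0) :
    lam = 0 := by
  have linearIndependent_f := stmt_4_general (by simp [Real.pi_ne_zero]) h0 hqper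
  refine linearIndependent_iff.1 linearIndependent_f lam (funext fun ξ ↦ ?_)
  simpa [Finsupp.linearCombination_apply, Finsupp.sum] using hlam ξ ξ.2
end

section
/- For every τ ∈ ℂ with Im τ > 0 and every ξ ∈ ℂ, one has θ(ξ, τ) = 0 if and only if ξ ∈ ℤ + τℤ, i.e. if and only if there exist integers m, n with ξ = m + n·τ. -/
open Complex

/-- The "two thirds of the Jacobi triple product formula":
`θ(ξ, τ) = q^{1/12} (z^{1/2} - z^{-1/2}) ∏_{j≥1} (1 - qʲz) ∏_{j≥1} (1 - qʲz⁻¹)`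
with `q = exp(2πiτ)`, `z = exp(2πiξ)`. -/
noncomputable def theta (ξ τ : ℂ) : ℂ :=
  Complex.exp ((Real.pi : ℂ) * Complex.I * τ / 6) *
    (Complex.exp ((Real.pi : ℂ) * Complex.I * ξ) -
      Complex.exp (-((Real.pi : ℂ) * Complex.I * ξ))) *
    (∏' j : ℕ, (1 - Complex.exp (2 * (Real.pi : ℂ) * Complex.I * (((j : ℂ) + 1) * τ + ξ)))) *
    (∏' j : ℕ, (1 - Complex.exp (2 * (Real.pi : ℂ) * Complex.I * (((j : ℂ) + 1) * τ - ξ))))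

/-!
An infinite product `∏ (1 - fᵢ)` with `∑ ‖fᵢ‖ < ∞` vanishes only if one of its factors does. For
`‖q‖ < 1` this applies to both products in `θ`, so `θ(ξ, τ) = 0` exactly when `qⁿz = 1` for some
`n ∈ ℤ`: the prefactor accounts for `n = 0`, the first product for `n > 0` and the second for
`n < 0`.
-/

section InfiniteProduct

variable {R : Type*} [NormedCommRing R] [NormOneClass R] [NormMulClass R] [CompleteSpace R]

lemma tprod_one_sub_eq_zero_iff_of_summable_norm {ι : Type*} {f : ι → R}
    (hf : Summable fun i ↦ ‖f i‖) : ∏' i, (1 - f i) = 0 ↔ ∃ i, f i = 1 := by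
  refine ⟨fun hprod ↦ ?_, fun ⟨i, hi⟩ ↦ tprod_of_exists_eq_zero ⟨i, by rw [hi, sub_self]⟩⟩
  by_contra! hne
  have hfactor (i : ι) : 1 + -f i ≠ 0 := by
    simpa only [← sub_eq_add_neg] using sub_ne_zero.mpr (hne i).symm
  have hsum : Summable fun i ↦ ‖-f i‖ := by simpa only [norm_neg] using hf
  exact tprod_one_add_ne_zero_of_summable hfactor hsum
    (by simpa only [← sub_eq_add_neg] using hprod)

lemma tprod_one_sub_pow_succ_mul_eq_zero_iff {q : R} (hq : ‖q‖ < 1) (z : R) :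
    ∏' j : ℕ, (1 - q ^ (j + 1) * z) = 0 ↔ ∃ j : ℕ, q ^ (j + 1) * z = 1 := by
  refine tprod_one_sub_eq_zero_iff_of_summable_norm ?_
  have hgeom : Summable fun j : ℕ ↦ ‖q‖ ^ (j + 1) :=
    (summable_nat_add_iff 1).mpr (summable_geometric_of_lt_one (norm_nonneg q) hq)
  simpa only [norm_mul, norm_pow] using hgeom.mul_right ‖z‖

end InfiniteProduct

section Exponential

lemma exp_two_pi_mul_I_mul_eq_one_iff (w : ℂ) :
    exp (2 * Real.pi * I * w) = 1 ↔ ∃ m : ℤ, w = m := by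
  rw [exp_eq_one_iff]
  exact exists_congr fun m ↦ by rw [mul_comm (m : ℂ), mul_right_inj' two_pi_I_ne_zero]

lemma exp_sub_exp_neg_eq_zero_iff (w : ℂ) : exp w - exp (-w) = 0 ↔ exp (2 * w) = 1 := by
  rw [sub_eq_zero, exp_neg, ← mul_eq_one_iff_eq_inv₀ (exp_ne_zero w), ← exp_add, ← two_mul]

lemma tprod_one_sub_exp_eq_zero_iff {τ : ℂ} (hτ : 0 < τ.im) (ξ : ℂ) :
    ∏' j : ℕ, (1 - exp (2 * Real.pi * I * ((j + 1) * τ + ξ))) = 0 ↔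
      ∃ (j : ℕ) (m : ℤ), (j + 1) * τ + ξ = m := by
  have hfactor (j : ℕ) : exp (2 * Real.pi * I * ((j + 1) * τ + ξ)) =
      exp (2 * Real.pi * I * τ) ^ (j + 1) * exp (2 * Real.pi * I * ξ) := by
    rw [← exp_nat_mul, ← exp_add]
    push_cast
    ring_nf
  simp_rw [← exp_two_pi_mul_I_mul_eq_one_iff, hfactor]
  exact tprod_one_sub_pow_succ_mul_eq_zero_iff
    (UpperHalfPlane.norm_exp_two_pi_I_lt_one ⟨τ, hτ⟩) _

end Exponential

lemma theta_eq_zero_iff_exists_factor_eq_zero {τ : ℂ} (hτ : 0 < τ.im) (ξ : ℂ) :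
    theta ξ τ = 0 ↔ (∃ m : ℤ, ξ = m) ∨ (∃ (j : ℕ) (m : ℤ), (j + 1) * τ + ξ = m) ∨
      ∃ (j : ℕ) (m : ℤ), (j + 1) * τ - ξ = m := by
  have hprefactor : exp (Real.pi * I * ξ) - exp (-(Real.pi * I * ξ)) = 0 ↔ ∃ m : ℤ, ξ = m := by
    rw [exp_sub_exp_neg_eq_zero_iff, ← exp_two_pi_mul_I_mul_eq_one_iff]
    ring_nf
  have hprod_neg := tprod_one_sub_exp_eq_zero_iff hτ (-ξ)
  simp only [← sub_eq_add_neg] at hprod_neg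
  simp only [theta, mul_eq_zero, exp_ne_zero, false_or, hprefactor,
    tprod_one_sub_exp_eq_zero_iff hτ, hprod_neg, or_assoc]

lemma exists_int_iff_zero_or_neg_succ_or_succ {p : ℤ → Prop} :
    (∃ n, p n) ↔ p 0 ∨ (∃ j : ℕ, p (-(j + 1))) ∨ ∃ j : ℕ, p (j + 1) := by
  constructor
  · rintro ⟨(_ | j) | j, hn⟩
    · exact Or.inl hn
    · exact Or.inr (Or.inr ⟨j, hn⟩)
    · exact Or.inr (Or.inl ⟨j, by rwa [← Int.negSucc_eq]⟩)
  · rintro (h | ⟨j, h⟩ | ⟨j, h⟩) <;> exact ⟨_, h⟩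

/-- `θ(ξ, τ) = 0` iff `ξ ∈ ℤ + τℤ`. -/
theorem stmt_5 (τ : ℂ) (hτ : 0 < τ.im) (ξ : ℂ) :
    theta ξ τ = 0 ↔ ∃ m n : ℤ, ξ = (m : ℂ) + (n : ℂ) * τ := by
  rw [exists_comm, exists_int_iff_zero_or_neg_succ_or_succ,
    theta_eq_zero_iff_exists_factor_eq_zero hτ]
  refine or_congr ?_ (or_congr ?_ ?_)
  · simp only [Int.cast_zero, zero_mul, add_zero]
  · refine exists_congr fun j ↦ exists_congr fun m ↦ ?_
    push_cast
    rw [neg_mul, ← sub_eq_add_neg, eq_sub_iff_add_eq']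
  · refine exists_congr fun j ↦ (Equiv.neg ℤ).exists_congr fun m ↦ ?_
    push_cast [Equiv.neg_apply]
    rw [sub_eq_iff_eq_add, eq_neg_add_iff_add_eq, eq_comm]
end

section
/- Let τ ∈ ℂ with Im τ > 0 and let ξ, η ∈ ℂ satisfy θ(ξ, τ) ≠ 0 and θ(η, τ) ≠ 0. Then the Kronecker function satisfies the quasi-periodicity F(ξ + τ, η, τ) = exp(−2πiη) · F(ξ, η, τ). -/
open Complex

/-- The Kronecker function `F(ξ, η, τ) = θ′(0, τ) · θ(ξ + η, τ) / (θ(ξ, τ) · θ(η, τ))`,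
where `θ′(0, τ)` is the derivative of `ξ ↦ θ(ξ, τ)` at `ξ = 0`. -/
noncomputable def kronF (ξ η τ : ℂ) : ℂ :=
  deriv (fun z => theta z τ) 0 * theta (ξ + η) τ / (theta ξ τ * theta η τ)

/-!
With `w = exp (2πiξ)` and `q = exp (2πiτ)`, the function `θ` is an exponential factor times
`(w; q)_∞ (q / w; q)_∞`. The shift `ξ ↦ ξ + τ` replaces `w` by `wq`: one factor moves from the first
product to the second, which costs `-w⁻¹`. In the quotient `F` the multipliers of `θ(ξ + η)` and
`θ(ξ)` leave exactly `exp (-2πiη)`.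
-/

open scoped Real

/-- The infinite `q`-Pochhammer symbol `(a; q)_∞ = ∏_{j ≥ 0} (1 - a qʲ)`, in which the infinite
products of `theta` are expressed. It has the junk value of `∏'` where the product diverges. -/
noncomputable def qPochhammerInf {R : Type*} [CommRing R] [TopologicalSpace R] (a q : R) : R :=
  ∏' j : ℕ, (1 - a * q ^ j)

/-- The multiplicative theta function `(w; q)_∞ (q / w; q)_∞`, to which `theta` reduces in the
variables `w = exp (2πiξ)` and `q = exp (2πiτ)`. It is meaningful for `w ≠ 0` and `‖q‖ < 1`. -/
noncomputable def qTheta {K : Type*} [Field K] [TopologicalSpace K] (w q : K) : K :=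
  qPochhammerInf w q * qPochhammerInf (q / w) q

section NormedCommRing

variable {R : Type*} [NormedCommRing R] [NormOneClass R] [CompleteSpace R] {q : R}

theorem multipliable_one_sub_mul_pow (a : R) (hq : ‖q‖ < 1) :
    Multipliable fun j : ℕ ↦ 1 - a * q ^ j := by
  have h_summable : Summable fun j : ℕ ↦ ‖-(a * q ^ j)‖ := by
    refine .of_nonneg_of_le (fun _ ↦ norm_nonneg _) (fun j ↦ ?_)
      ((summable_norm_geometric_of_norm_lt_one hq).mul_left ‖a‖)
    simpa only [norm_neg] using norm_mul_le a (q ^ j)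
  simpa only [sub_eq_add_neg] using multipliable_one_add_of_summable h_summable

theorem qPochhammerInf_eq_one_sub_mul (a : R) (hq : ‖q‖ < 1) :
    qPochhammerInf a q = (1 - a) * qPochhammerInf (a * q) q := by
  have h_shift (j : ℕ) : 1 - a * q ^ (j + 1) = 1 - a * q * q ^ j := by ring
  have h_tail : Multipliable fun j : ℕ ↦ 1 - a * q ^ (j + 1) := by
    simpa only [h_shift] using multipliable_one_sub_mul_pow (a * q) hq
  calc qPochhammerInf a q
      = (1 - a * q ^ 0) * ∏' j : ℕ, (1 - a * q ^ (j + 1)) :=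
        tprod_eq_zero_mul' (f := fun j ↦ 1 - a * q ^ j) h_tail
    _ = (1 - a) * qPochhammerInf (a * q) q := by
        rw [pow_zero, mul_one, tprod_congr h_shift, qPochhammerInf]

end NormedCommRing

theorem qTheta_mul_right {K : Type*} [NormedField K] [CompleteSpace K] {w q : K}
    (hw : w ≠ 0) (hq₀ : q ≠ 0) (hq : ‖q‖ < 1) :
    qTheta (w * q) q = -w⁻¹ * qTheta w q := by
  calc qTheta (w * q) q
      = qPochhammerInf (w * q) q * qPochhammerInf w⁻¹ q := by
        rw [qTheta, div_mul_cancel_right₀ hq₀]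
    _ = qPochhammerInf (w * q) q * ((1 - w⁻¹) * qPochhammerInf (q / w) q) := by
        rw [qPochhammerInf_eq_one_sub_mul w⁻¹ hq, inv_mul_eq_div]
    _ = -w⁻¹ * ((1 - w) * qPochhammerInf (w * q) q * qPochhammerInf (q / w) q) := by
        field_simp
        ring
    _ = -w⁻¹ * qTheta w q := by
        rw [← qPochhammerInf_eq_one_sub_mul w hq, qTheta]

theorem qPochhammerInf_exp (z τ : ℂ) :
    qPochhammerInf (exp (2 * π * I * z)) (exp (2 * π * I * τ)) =
      ∏' j : ℕ, (1 - exp (2 * π * I * (j * τ + z))) := by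
  refine tprod_congr fun j ↦ ?_
  rw [← exp_nat_mul, ← exp_add]
  ring_nf

theorem theta_eq_mul_qTheta {τ : ℂ} (hτ : 0 < τ.im) (z : ℂ) :
    theta z τ = -exp (π * I * τ / 6) * exp (-(π * I * z)) *
      qTheta (exp (2 * π * I * z)) (exp (2 * π * I * τ)) := by
  have hq : ‖exp (2 * π * I * τ)‖ < 1 := UpperHalfPlane.norm_exp_two_pi_I_lt_one ⟨τ, hτ⟩
  have h_plus : ∏' j : ℕ, (1 - exp (2 * π * I * ((j + 1) * τ + z))) =
      qPochhammerInf (exp (2 * π * I * z) * exp (2 * π * I * τ)) (exp (2 * π * I * τ)) := by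
    rw [← exp_add, ← mul_add, qPochhammerInf_exp]
    exact tprod_congr fun j ↦ by ring_nf
  have h_minus : ∏' j : ℕ, (1 - exp (2 * π * I * ((j + 1) * τ - z))) =
      qPochhammerInf (exp (2 * π * I * τ) / exp (2 * π * I * z)) (exp (2 * π * I * τ)) := by
    rw [← exp_sub, ← mul_sub, qPochhammerInf_exp]
    exact tprod_congr fun j ↦ by ring_nf
  have h_sub : exp (π * I * z) - exp (-(π * I * z)) =
      -exp (-(π * I * z)) * (1 - exp (2 * π * I * z)) := by
    rw [mul_sub, neg_mul, neg_mul, ← exp_add]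
    ring_nf
  rw [theta, h_plus, h_minus, h_sub, qTheta,
    qPochhammerInf_eq_one_sub_mul (exp (2 * π * I * z)) hq]
  ring

theorem theta_add_tau {τ : ℂ} (hτ : 0 < τ.im) (z : ℂ) :
    theta (z + τ) τ = -exp (-(π * I * (2 * z + τ))) * theta z τ := by
  have hq : ‖exp (2 * π * I * τ)‖ < 1 := UpperHalfPlane.norm_exp_two_pi_I_lt_one ⟨τ, hτ⟩
  have h_exp : exp (-(π * I * (z + τ))) * (exp (2 * π * I * z))⁻¹ =
      exp (-(π * I * (2 * z + τ))) * exp (-(π * I * z)) := by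
    rw [← exp_neg, ← exp_add, ← exp_add]
    ring_nf
  rw [theta_eq_mul_qTheta hτ, theta_eq_mul_qTheta hτ, mul_add (2 * π * I), exp_add,
    qTheta_mul_right (exp_ne_zero _) (exp_ne_zero _) hq]
  linear_combination
    exp (π * I * τ / 6) * qTheta (exp (2 * π * I * z)) (exp (2 * π * I * τ)) * h_exp

/-- quasi-periodicity `F(ξ + τ, η, τ) = exp(-2πiη) · F(ξ, η, τ)`. -/
theorem stmt_10 (τ : ℂ) (hτ : 0 < τ.im) (ξ η : ℂ)
    (hξ : theta ξ τ ≠ 0) (hη : theta η τ ≠ 0) :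
    kronF (ξ + τ) η τ = Complex.exp (-(2 * (Real.pi : ℂ) * Complex.I * η)) * kronF ξ η τ := by
  have h_multiplier : exp (-(π * I * (2 * (ξ + η) + τ))) =
      exp (-(2 * π * I * η)) * exp (-(π * I * (2 * ξ + τ))) := by
    rw [← exp_add]
    ring_nf
  rw [kronF, kronF, add_right_comm, theta_add_tau hτ, theta_add_tau hτ, h_multiplier]
  field_simp
end

section
/- Let L be a Lie algebra over a commutative ring, let ι be a type, and let x, y : ι → L. For i ≠ j set t_{ij} := ⁅x_i, y_j⁆. Assume: (a) ⁅x_i, y_j⁆ = ⁅x_j, y_i⁆ for all i ≠ j; (b) ⁅x_i, t_{jk}⁆ = 0 and ⁅y_i, t_{jk}⁆ = 0 for all pairwise distinct i, j, k; (c) ⁅x_i + x_j, t_{ij}⁆ = 0 and ⁅y_i + y_j, t_{ij}⁆ = 0 for all i ≠ j. Then: (1) ⁅t_{ij}, t_{kl}⁆ = 0 for all pairwise distinct i, j, k, l, and (2) ⁅t_{ij}, t_{ik} + t_{jk}⁆ = 0 for all pairwise distinct i, j, k. That is, the Kohno–Drinfeld relations among the t_{ij} follow from the relations (a)–(c) and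 the Jacobi identity. -/
/-!
The elements annihilating a fixed `m` are closed under the bracket, by the Jacobi identity.
For (1), `x i` and `y j` annihilate `t_{kl}` by (b), hence so does `t_{ij}`. For (2),
`t_{ik} + t_{jk} = ⁅x i + x j, y k⁆`, where `x i + x j` annihilates `t_{ij}` by (c) and `y k`
does so by (b).
-/

theorem lie_lie_eq_zero_of_lie_eq_zero {L M : Type*} [LieRing L] [AddCommGroup M]
    [LieRingModule L M] {a b : L} {m : M} (ha : ⁅a, m⁆ = 0) (hb : ⁅b, m⁆ = 0) :
    ⁅⁅a, b⁆, m⁆ = 0 := by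
  rw [lie_lie, ha, hb, lie_zero, lie_zero, sub_zero]

theorem stmt_16_general {L ι : Type*} [LieRing L] (x y : ι → L)
    (hbx : ∀ i j k, i ≠ j → i ≠ k → j ≠ k → ⁅x i, ⁅x j, y k⁆⁆ = 0)
    (hby : ∀ i j k, i ≠ j → i ≠ k → j ≠ k → ⁅y i, ⁅x j, y k⁆⁆ = 0)
    (hcx : ∀ i j, i ≠ j → ⁅x i + x j, ⁅x i, y j⁆⁆ = 0) :
    (∀ i j k l, i ≠ k → i ≠ l → j ≠ k → j ≠ l → k ≠ l →
      ⁅⁅x i, y j⁆, ⁅x k, y l⁆⁆ = 0) ∧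
    (∀ i j k, i ≠ j → i ≠ k → j ≠ k →
      ⁅⁅x i, y j⁆, ⁅x i, y k⁆ + ⁅x j, y k⁆⁆ = 0) := by
  constructor
  · intro i j k l hik hil hjk hjl hkl
    exact lie_lie_eq_zero_of_lie_eq_zero (hbx i k l hik hil hkl) (hby j k l hjk hjl hkl)
  · intro i j k hij hik hjk
    have sum_annihilates : ⁅⁅x i + x j, y k⁆, ⁅x i, y j⁆⁆ = 0 :=
      lie_lie_eq_zero_of_lie_eq_zero (hcx i j hij) (hby k i j hik.symm hjk.symm hij)
    rw [← add_lie, ← lie_skew, sum_annihilates, neg_zero]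

theorem stmt_16 {R L ι : Type*} [CommRing R] [LieRing L] [LieAlgebra R L]
    (x y : ι → L)
    -- (a) symmetry: `t_{ij} = t_{ji}`
    (ha : ∀ i j, i ≠ j → ⁅x i, y j⁆ = ⁅x j, y i⁆)
    -- (b) `⁅x_i, t_{jk}⁆ = 0` and `⁅y_i, t_{jk}⁆ = 0` for `i, j, k` pairwise distinct
    (hbx : ∀ i j k, i ≠ j → i ≠ k → j ≠ k → ⁅x i, ⁅x j, y k⁆⁆ = 0)
    (hby : ∀ i j k, i ≠ j → i ≠ k → j ≠ k → ⁅y i, ⁅x j, y k⁆⁆ = 0)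
    -- (c) `⁅x_i + x_j, t_{ij}⁆ = 0` and `⁅y_i + y_j, t_{ij}⁆ = 0` for `i ≠ j`
    (hcx : ∀ i j, i ≠ j → ⁅x i + x j, ⁅x i, y j⁆⁆ = 0)
    (hcy : ∀ i j, i ≠ j → ⁅y i + y j, ⁅x i, y j⁆⁆ = 0) :
    -- (1) `⁅t_{ij}, t_{kl}⁆ = 0` for `i, j, k, l` pairwise distinct
    (∀ i j k l, i ≠ j → i ≠ k → i ≠ l → j ≠ k → j ≠ l → k ≠ l →
      ⁅⁅x i, y j⁆, ⁅x k, y l⁆⁆ = 0) ∧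
    -- (2) `⁅t_{ij}, t_{ik} + t_{jk}⁆ = 0` for `i, j, k` pairwise distinct
    (∀ i j k, i ≠ j → i ≠ k → j ≠ k →
      ⁅⁅x i, y j⁆, ⁅x i, y k⁆ + ⁅x j, y k⁆⁆ = 0) := by
  obtain ⟨h_disjoint, h_shared⟩ := stmt_16_general x y hbx hby hcx
  exact ⟨fun i j k l _ => h_disjoint i j k l, h_shared⟩
end

section
/- Fix an integer n ≥ 1. Let L̃_n be the quotient of the free Lie algebra over ℚ on generators X̃_1, …, X̃_n, Ỹ_1, …, Ỹ_n and t̃_{ij} (1 ≤ i ≠ j ≤ n) by the Lie ideal generated by the relators: t̃_{ij} − t̃_{ji}; t̃_{ij} − ⁅X̃_i, Ỹ_j⁆ (i ≠ j); ⁅X̃_i, X̃_j⁆ and ⁅Ỹ_i, Ỹ_j⁆ (i ≠ j); ⁅X̃_i, t̃_{jk}⁆ and ⁅Ỹ_i, t̃_{jk}⁆ (i, j, k distinct); ⁅X̃_i + X̃_j, t̃_{ij}⁆ and ⁅Ỹ_i + Ỹ_j, t̃_{ij}⁆ (i ≠ j). Then the assignment X̃_i ↦ X_i, Ỹ_i ↦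 Y_i, t̃_{ij} ↦ t_{ij} (for 1 ≤ i, j ≤ n, viewed among the n+1 indices of t̄_{1,n+1}) determines a well-defined Lie algebra homomorphism L̃_n → t̄_{1,n+1}, and this homomorphism is an isomorphism. -/
/-- Generators of the Lie algebra `t_{1,n}`: `X_i`, `Y_i` (`i ∈ Fin n`), and
`t_{ij}` for `i ≠ j`. -/
abbrev ElGen (n : ℕ) : Type := Fin n ⊕ Fin n ⊕ {p : Fin n × Fin n // p.1 ≠ p.2}

/-- The generator `X_i` of the free Lie algebra. -/
noncomputable def genX {n : ℕ} (i : Fin n) : FreeLieAlgebra ℚ (ElGen n) :=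
  FreeLieAlgebra.of ℚ (Sum.inl i)

/-- The generator `Y_i` of the free Lie algebra. -/
noncomputable def genY {n : ℕ} (i : Fin n) : FreeLieAlgebra ℚ (ElGen n) :=
  FreeLieAlgebra.of ℚ (Sum.inr (Sum.inl i))

/-- The generator `t_{ij}` (`i ≠ j`) of the free Lie algebra. -/
noncomputable def genT {n : ℕ} (i j : Fin n) (h : i ≠ j) : FreeLieAlgebra ℚ (ElGen n) :=
  FreeLieAlgebra.of ℚ (Sum.inr (Sum.inr ⟨(i, j), h⟩))

/-- The relators defining `t_{1,n}`. -/
def t1Rel (n : ℕ) : Set (FreeLieAlgebra ℚ (ElGen n)) :=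
  -- t_{ij} = t_{ji}
  {z | ∃ i j, ∃ h : i ≠ j, z = genT i j h - genT j i h.symm} ∪
  -- t_{ij} = ⁅X_i, Y_j⁆
  {z | ∃ i j, ∃ h : i ≠ j, z = genT i j h - ⁅genX i, genY j⁆} ∪
  -- ⁅X_i, X_j⁆ = 0, ⁅Y_i, Y_j⁆ = 0
  {z | ∃ i j, i ≠ j ∧ z = ⁅genX i, genX j⁆} ∪
  {z | ∃ i j, i ≠ j ∧ z = ⁅genY i, genY j⁆} ∪
  -- ⁅X_i, Y_i⁆ = -Σ_{j ≠ i} t_{ij}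
  {z | ∃ i, z = ⁅genX i, genY i⁆ + ∑ j : Fin n, if h : i ≠ j then genT i j h else 0} ∪
  -- ⁅t_{ij}, t_{ik} + t_{jk}⁆ = 0 for i, j, k distinct
  {z | ∃ i j k, ∃ (hij : i ≠ j) (hik : i ≠ k) (hjk : j ≠ k),
    z = ⁅genT i j hij, genT i k hik + genT j k hjk⁆} ∪
  -- ⁅t_{ij}, t_{kl}⁆ = 0 for i, j, k, l distinct
  {z | ∃ i j k l, ∃ (hij : i ≠ j) (hkl : k ≠ l),
    i ≠ k ∧ i ≠ l ∧ j ≠ k ∧ j ≠ l ∧ z = ⁅genT i j hij, genT k l hkl⁆} ∪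
  -- ⁅X_i, t_{jk}⁆ = 0, ⁅Y_i, t_{jk}⁆ = 0 for i, j, k distinct
  {z | ∃ i j k, ∃ hjk : j ≠ k, i ≠ j ∧ i ≠ k ∧ z = ⁅genX i, genT j k hjk⁆} ∪
  {z | ∃ i j k, ∃ hjk : j ≠ k, i ≠ j ∧ i ≠ k ∧ z = ⁅genY i, genT j k hjk⁆} ∪
  -- ⁅X_i + X_j, t_{ij}⁆ = 0, ⁅Y_i + Y_j, t_{ij}⁆ = 0 for i ≠ j
  {z | ∃ i j, ∃ h : i ≠ j, z = ⁅genX i + genX j, genT i j h⁆} ∪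
  {z | ∃ i j, ∃ h : i ≠ j, z = ⁅genY i + genY j, genT i j h⁆}

/-- The Lie ideal generated by the relators of `t_{1,n}`. -/
noncomputable def t1Ideal (n : ℕ) : LieIdeal ℚ (FreeLieAlgebra ℚ (ElGen n)) :=
  LieSubmodule.lieSpan ℚ (FreeLieAlgebra ℚ (ElGen n)) (t1Rel n)

/-- The Lie algebra `t_{1,n}`. -/
abbrev t1 (n : ℕ) : Type _ := FreeLieAlgebra ℚ (ElGen n) ⧸ t1Ideal n

/-- The quotient map onto `t_{1,n}`. -/
noncomputable def t1Mk (n : ℕ) : FreeLieAlgebra ℚ (ElGen n) → t1 n :=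
  LieSubmodule.Quotient.mk (N := t1Ideal n)

/-- The Lie ideal of `t_{1,n}` generated by `Σ X_i` and `Σ Y_i`. -/
noncomputable def centralIdeal (n : ℕ) : LieIdeal ℚ (t1 n) :=
  LieSubmodule.lieSpan ℚ (t1 n)
    {t1Mk n (∑ i : Fin n, genX i), t1Mk n (∑ i : Fin n, genY i)}

/-- The Lie algebra `t̄_{1,n}`, the quotient of `t_{1,n}` by the central elements
`Σ X_i` and `Σ Y_i`. -/
abbrev t1Bar (n : ℕ) : Type _ := t1 n ⧸ centralIdeal n

/-- The canonical map from the free Lie algebra onto `t̄_{1,n}`. -/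
noncomputable def t1BarMk (n : ℕ) : FreeLieAlgebra ℚ (ElGen n) → t1Bar n :=
  fun x => LieSubmodule.Quotient.mk (N := centralIdeal n) (t1Mk n x)

/-- The relators defining the Lie algebra `L̃_n`. -/
def tildeRel (n : ℕ) : Set (FreeLieAlgebra ℚ (ElGen n)) :=
  -- t̃_{ij} = t̃_{ji}
  {z | ∃ i j, ∃ h : i ≠ j, z = genT i j h - genT j i h.symm} ∪
  -- t̃_{ij} = ⁅X̃_i, Ỹ_j⁆
  {z | ∃ i j, ∃ h : i ≠ j, z = genT i j h - ⁅genX i, genY j⁆} ∪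
  -- ⁅X̃_i, X̃_j⁆ = 0, ⁅Ỹ_i, Ỹ_j⁆ = 0
  {z | ∃ i j, i ≠ j ∧ z = ⁅genX i, genX j⁆} ∪
  {z | ∃ i j, i ≠ j ∧ z = ⁅genY i, genY j⁆} ∪
  -- ⁅X̃_i, t̃_{jk}⁆ = 0, ⁅Ỹ_i, t̃_{jk}⁆ = 0 for i, j, k distinct
  {z | ∃ i j k, ∃ hjk : j ≠ k, i ≠ j ∧ i ≠ k ∧ z = ⁅genX i, genT j k hjk⁆} ∪
  {z | ∃ i j k, ∃ hjk : j ≠ k, i ≠ j ∧ i ≠ k ∧ z = ⁅genY i, genT j k hjk⁆} ∪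
  -- ⁅X̃_i + X̃_j, t̃_{ij}⁆ = 0, ⁅Ỹ_i + Ỹ_j, t̃_{ij}⁆ = 0 for i ≠ j
  {z | ∃ i j, ∃ h : i ≠ j, z = ⁅genX i + genX j, genT i j h⁆} ∪
  {z | ∃ i j, ∃ h : i ≠ j, z = ⁅genY i + genY j, genT i j h⁆}

/-- The Lie ideal generated by the relators of `L̃_n`. -/
noncomputable def tildeIdeal (n : ℕ) : LieIdeal ℚ (FreeLieAlgebra ℚ (ElGen n)) :=
  LieSubmodule.lieSpan ℚ (FreeLieAlgebra ℚ (ElGen n)) (tildeRel n)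

/-- The Lie algebra `L̃_n`. -/
abbrev Ltilde (n : ℕ) : Type _ := FreeLieAlgebra ℚ (ElGen n) ⧸ tildeIdeal n

/-- The quotient map onto `L̃_n`. -/
noncomputable def LtildeMk (n : ℕ) : FreeLieAlgebra ℚ (ElGen n) → Ltilde n :=
  LieSubmodule.Quotient.mk (N := tildeIdeal n)

/-!
Put `t_{ij} = ⁅X_i, Y_j⁆`. In `t̄_{1,n+1}` the last generators are `X_{n+1} = -∑ X_i` and
`Y_{n+1} = -∑ Y_i`, so the content of the theorem is that the relations of `L̃_n` propagate to
the families extended in this way, and that they imply the remaining relations of `t_{1,n+1}`.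

Since the `X_i` commute and `t` is symmetric, `u_{ijk} = ⁅X_i, ⁅X_j, Y_k⁆⁆` is a symmetric
3-tensor whose sums over any index vanish. If `i ≠ j` are at most `n`, the sum of `u_{kij}` over
`k` reduces to `u_{n+1,i,j} + u_{iij} + u_{jij}`, and `u_{iij} + u_{jij} = 0` is a relation of
`L̃_n`; hence `u` vanishes at all triples of distinct indices. The sum over `k` then reduces to
`u_{iij} + u_{jij}` for all `i ≠ j`, which is therefore zero. The relations among the `t_{ij}`
follow from the Jacobi identity, and `⁅X_i, Y_i⁆ = -∑ t_{ij}` is `⁅X_i, ∑ Y_j⁆ = 0`.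
-/

section SumZeroTensors

variable {ι M : Type*} [Fintype ι] [AddCommGroup M] {o : ι}

theorem skew_eq_zero_of_sum_eq_zero {a : ι → ι → M} (diag : a o o = 0)
    (skew : ∀ i j, a i j = -a j i) (sum : ∀ j, ∑ i, a i j = 0)
    (off : ∀ i j, i ≠ o → j ≠ o → a i j = 0) (i j : ι) : a i j = 0 := by
  have row (j : ι) (hj : j ≠ o) : a o j = 0 := by
    rw [← sum j, Fintype.sum_eq_single o fun i hi => off i j hi hj]
  by_cases hi : i = o <;> by_cases hj : j = o
  · rw [hi, hj, diag]
  · rw [hi, row j hj]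
  · rw [hj, skew, row i hi, neg_zero]
  · exact off i j hi hj

theorem symm_eq_zero_of_ne_of_sum_eq_zero {u : ι → ι → ι → M}
    (swap_left : ∀ i j k, u i j k = u j i k) (swap_right : ∀ i j k, u i j k = u i k j)
    (sum : ∀ j k, ∑ i, u i j k = 0)
    (distinct : ∀ i j k, i ≠ o → j ≠ o → k ≠ o → i ≠ j → i ≠ k → j ≠ k → u i j k = 0)
    (pair : ∀ i j, i ≠ o → j ≠ o → i ≠ j → u i i j + u j i j = 0)
    {i j k : ι} (hij : i ≠ j) (hik : i ≠ k) (hjk : j ≠ k) : u i j k = 0 := by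
  classical
  have slice (j k : ι) (hj : j ≠ o) (hk : k ≠ o) (hjk : j ≠ k) : u o j k = 0 := by
    have off (i : ι) (hi : i ∉ ({o, j, k} : Finset ι)) : u i j k = 0 := by
      simp only [Finset.mem_insert, Finset.mem_singleton, not_or] at hi
      exact distinct i j k hi.1 hj hk hi.2.1 hi.2.2 hjk
    have total : u o j k + (u j j k + u k j k) = 0 := by
      rw [← sum j k, ← Finset.sum_subset (Finset.subset_univ {o, j, k}) fun i _ hi => off i hi,
        Finset.sum_insert (by simp [hj.symm, hk.symm]), Finset.sum_pair hjk]
    rwa [pair j k hj hk hjk, add_zero] at total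
  obtain rfl | hi := eq_or_ne i o
  · exact slice j k hij.symm hik.symm hjk
  obtain rfl | hj := eq_or_ne j o
  · rw [swap_left, slice i k hi hjk.symm hik]
  obtain rfl | hk := eq_or_ne k o
  · rw [swap_right, swap_left, slice i j hi hj hij]
  exact distinct i j k hi hj hk hij hik hjk

theorem add_eq_zero_of_sum_eq_zero {f : ι → M} (sum : ∑ k, f k = 0) {i j : ι} (hij : i ≠ j)
    (off : ∀ k, k ≠ i → k ≠ j → f k = 0) : f i + f j = 0 := by
  rw [← sum, Fintype.sum_eq_add i j hij fun k hk => off k hk.1 hk.2]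

end SumZeroTensors

/-- The relations of `L̃_n` for two families in a Lie ring, with `⁅X i, Y j⁆` in place of
`t_{ij}`. The index type is arbitrary, so that families can be restricted and extended. -/
structure TildeRelations {ι L : Type*} [LieRing L] (X Y : ι → L) : Prop where
  comm_X : ∀ i j, ⁅X i, X j⁆ = 0
  comm_Y : ∀ i j, ⁅Y i, Y j⁆ = 0
  symm : ∀ i j, ⁅X i, Y j⁆ = ⁅X j, Y i⁆
  lie_X_t : ∀ i j k, i ≠ j → i ≠ k → j ≠ k → ⁅X i, ⁅X j, Y k⁆⁆ = 0
  lie_Y_t : ∀ i j k, i ≠ j → i ≠ k → j ≠ k → ⁅Y i, ⁅X j, Y k⁆⁆ = 0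
  lie_add_X_t : ∀ i j, i ≠ j → ⁅X i + X j, ⁅X i, Y j⁆⁆ = 0
  lie_add_Y_t : ∀ i j, i ≠ j → ⁅Y i + Y j, ⁅X i, Y j⁆⁆ = 0

namespace TildeRelations

variable {ι κ L : Type*} [LieRing L] {X Y : ι → L}

theorem swap (h : TildeRelations X Y) : TildeRelations Y X := by
  have skew (i j : ι) : ⁅Y i, X j⁆ = -⁅X i, Y j⁆ := by rw [← lie_skew, h.symm]
  refine ⟨h.comm_Y, h.comm_X, ?_, ?_, ?_, ?_, ?_⟩ <;> intros <;>
    simp only [skew, lie_neg, neg_eq_zero, neg_inj]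
  · exact h.symm _ _
  · apply h.lie_Y_t <;> assumption
  · apply h.lie_X_t <;> assumption
  · apply h.lie_add_Y_t; assumption
  · apply h.lie_add_X_t; assumption

theorem comp (h : TildeRelations X Y) {e : κ → ι} (he : e.Injective) :
    TildeRelations (X ∘ e) (Y ∘ e) where
  comm_X _ _ := h.comm_X _ _
  comm_Y _ _ := h.comm_Y _ _
  symm _ _ := h.symm _ _
  lie_X_t _ _ _ hij hik hjk := h.lie_X_t _ _ _ (he.ne hij) (he.ne hik) (he.ne hjk)
  lie_Y_t _ _ _ hij hik hjk := h.lie_Y_t _ _ _ (he.ne hij) (he.ne hik) (he.ne hjk)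
  lie_add_X_t _ _ hij := h.lie_add_X_t _ _ (he.ne hij)
  lie_add_Y_t _ _ hij := h.lie_add_Y_t _ _ (he.ne hij)

section Extension

variable [Fintype ι] {e : κ → ι} {o : ι}

theorem comm_X_of_comp (h : TildeRelations (X ∘ e) (Y ∘ e)) (he : ∀ i ≠ o, ∃ a, e a = i)
    (hX : ∑ i, X i = 0) : ∀ i j, ⁅X i, X j⁆ = 0 := by
  refine skew_eq_zero_of_sum_eq_zero (o := o) (lie_self _) (fun i j => (lie_skew _ _).symm)
    (fun j => ?_) fun i j hi hj => ?_
  · rw [← sum_lie, hX, zero_lie]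
  · obtain ⟨a, rfl⟩ := he i hi
    obtain ⟨b, rfl⟩ := he j hj
    exact h.comm_X a b

theorem symm_of_comp (h : TildeRelations (X ∘ e) (Y ∘ e)) (he : ∀ i ≠ o, ∃ a, e a = i)
    (hX : ∑ i, X i = 0) (hY : ∑ i, Y i = 0) (i j : ι) : ⁅X i, Y j⁆ = ⁅X j, Y i⁆ := by
  refine sub_eq_zero.1 (skew_eq_zero_of_sum_eq_zero (a := fun i j => ⁅X i, Y j⁆ - ⁅X j, Y i⁆)
    (o := o) (sub_self _) (fun i j => (neg_sub _ _).symm) (fun j => ?_) (fun i j hi hj => ?_) i j)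
  · rw [Finset.sum_sub_distrib, ← sum_lie, ← lie_sum, hX, hY, zero_lie, lie_zero, sub_zero]
  · obtain ⟨a, rfl⟩ := he i hi
    obtain ⟨b, rfl⟩ := he j hj
    exact sub_eq_zero.2 (h.symm a b)

theorem lie_X_t_of_comp (h : TildeRelations (X ∘ e) (Y ∘ e)) (he : ∀ i ≠ o, ∃ a, e a = i)
    (hX : ∑ i, X i = 0) (hY : ∑ i, Y i = 0) :
    ∀ i j k, i ≠ j → i ≠ k → j ≠ k → ⁅X i, ⁅X j, Y k⁆⁆ = 0 := by
  intro i j k hij hik hjk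
  refine symm_eq_zero_of_ne_of_sum_eq_zero (u := fun i j k => ⁅X i, ⁅X j, Y k⁆⁆) (o := o)
    (fun i j k => ?swap_left) (fun i j k => ?swap_right) (fun j k => ?sum)
    (fun i j k hi hj hk hij hik hjk => ?distinct) (fun i j hi hj hij => ?pair) hij hik hjk
  case swap_left => rw [leibniz_lie, h.comm_X_of_comp he hX, zero_lie, zero_add]
  case swap_right => rw [h.symm_of_comp he hX hY]
  case sum => rw [← sum_lie, hX, zero_lie]
  case distinct =>
    obtain ⟨a, rfl⟩ := he i hi
    obtain ⟨b, rfl⟩ := he j hj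
    obtain ⟨c, rfl⟩ := he k hk
    exact h.lie_X_t a b c (ne_of_apply_ne e hij) (ne_of_apply_ne e hik) (ne_of_apply_ne e hjk)
  case pair =>
    obtain ⟨a, rfl⟩ := he i hi
    obtain ⟨b, rfl⟩ := he j hj
    rw [← add_lie]
    exact h.lie_add_X_t a b (ne_of_apply_ne e hij)

theorem lie_add_X_t_of_comp (h : TildeRelations (X ∘ e) (Y ∘ e)) (he : ∀ i ≠ o, ∃ a, e a = i)
    (hX : ∑ i, X i = 0) (hY : ∑ i, Y i = 0) :
    ∀ i j, i ≠ j → ⁅X i + X j, ⁅X i, Y j⁆⁆ = 0 := by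
  intro i j hij
  rw [add_lie]
  refine add_eq_zero_of_sum_eq_zero (f := fun k => ⁅X k, ⁅X i, Y j⁆⁆) ?_ hij fun k hki hkj => ?_
  · rw [← sum_lie, hX, zero_lie]
  · exact h.lie_X_t_of_comp he hX hY k i j hki hkj hij

theorem of_comp (h : TildeRelations (X ∘ e) (Y ∘ e)) (he : ∀ i ≠ o, ∃ a, e a = i)
    (hX : ∑ i, X i = 0) (hY : ∑ i, Y i = 0) : TildeRelations X Y := by
  have skew (i j : ι) : ⁅X i, Y j⁆ = -⁅Y i, X j⁆ := by
    rw [lie_skew, h.symm_of_comp he hX hY]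
  refine ⟨h.comm_X_of_comp he hX, h.swap.comm_X_of_comp he hY, h.symm_of_comp he hX hY,
    h.lie_X_t_of_comp he hX hY, fun i j k hij hik hjk => ?_, h.lie_add_X_t_of_comp he hX hY,
    fun i j hij => ?_⟩
  · rw [skew, lie_neg, h.swap.lie_X_t_of_comp he hY hX i j k hij hik hjk, neg_zero]
  · rw [skew, lie_neg, h.swap.lie_add_X_t_of_comp he hY hX i j hij, neg_zero]

end Extension

theorem lie_t_add_t (h : TildeRelations X Y) {i j k : ι} (hij : i ≠ j) (hik : i ≠ k)
    (hjk : j ≠ k) : ⁅⁅X i, Y j⁆, ⁅X i, Y k⁆ + ⁅X j, Y k⁆⁆ = 0 := by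
  have t_X : ⁅⁅X i, Y j⁆, X i + X j⁆ = 0 := by
    rw [← lie_skew, h.lie_add_X_t i j hij, neg_zero]
  have t_Y : ⁅⁅X i, Y j⁆, Y k⁆ = 0 := by
    rw [← lie_skew, h.lie_Y_t k i j hik.symm hjk.symm hij, neg_zero]
  rw [← add_lie, leibniz_lie, t_X, t_Y, zero_lie, lie_zero, add_zero]

theorem lie_t_t (h : TildeRelations X Y) {i j k l : ι} (hij : i ≠ j) (hik : i ≠ k) (hil : i ≠ l)
    (hjk : j ≠ k) (hjl : j ≠ l) : ⁅⁅X i, Y j⁆, ⁅X k, Y l⁆⁆ = 0 := by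
  have t_X : ⁅⁅X i, Y j⁆, X k⁆ = 0 := by
    rw [← lie_skew, h.lie_X_t k i j hik.symm hjk.symm hij, neg_zero]
  have t_Y : ⁅⁅X i, Y j⁆, Y l⁆ = 0 := by
    rw [← lie_skew, h.lie_Y_t l i j hil.symm hjl.symm hij, neg_zero]
  rw [leibniz_lie, t_X, t_Y, zero_lie, lie_zero, add_zero]

end TildeRelations

section LieQuotient

variable {R A B : Type*} [CommRing R] [LieRing A] [LieAlgebra R A] [LieRing B] [LieAlgebra R B]

/-- The quotient map by a Lie ideal as a Lie algebra homomorphism; Mathlib's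
`LieSubmodule.Quotient.mk'` is only a homomorphism of `A`-modules. -/
def lieQuotientMk (I : LieIdeal R A) : A →ₗ⁅R⁆ A ⧸ I :=
  { I.toSubmodule.mkQ with map_lie' := rfl }

theorem lieQuotientMk_surjective (I : LieIdeal R A) : Function.Surjective (lieQuotientMk I) :=
  Submodule.mkQ_surjective _

theorem lieQuotientMk_lieSpan_eq_zero {s : Set A} {x : A} (hx : x ∈ s) :
    lieQuotientMk (LieSubmodule.lieSpan R A s) x = 0 :=
  LieSubmodule.Quotient.mk_eq_zero'.2 (LieSubmodule.subset_lieSpan hx)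

/-- The universal property of the quotient by the Lie ideal generated by a set of relators. -/
def lieQuotientLift (s : Set A) (f : A →ₗ⁅R⁆ B) (hf : ∀ x ∈ s, f x = 0) :
    A ⧸ LieSubmodule.lieSpan R A s →ₗ⁅R⁆ B :=
  { (LieSubmodule.lieSpan R A s).toSubmodule.liftQ (f : A →ₗ[R] B) fun _ hx =>
      LieHom.mem_ker.1 ((LieSubmodule.lieSpan_le (N := f.ker)).2
        (fun x hx => LieHom.mem_ker.2 (hf x hx)) hx) with
    map_lie' := by
      rintro ⟨x⟩ ⟨y⟩
      exact f.map_lie x y }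

end LieQuotient

section Relators

variable {n : ℕ} {L : Type*} [LieRing L] [LieAlgebra ℚ L]

/-- The homomorphism from the free Lie algebra given by `X_i ↦ X i`, `Y_i ↦ Y i` and
`t_{ij} ↦ ⁅X i, Y j⁆`. -/
noncomputable def freeLift (X Y : Fin n → L) : FreeLieAlgebra ℚ (ElGen n) →ₗ⁅ℚ⁆ L :=
  FreeLieAlgebra.lift ℚ (Sum.elim X (Sum.elim Y fun p => ⁅X p.1.1, Y p.1.2⁆))

@[simp]
theorem freeLift_genX (X Y : Fin n → L) (i : Fin n) : freeLift X Y (genX i) = X i := by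
  simp [freeLift, genX]

@[simp]
theorem freeLift_genY (X Y : Fin n → L) (i : Fin n) : freeLift X Y (genY i) = Y i := by
  simp [freeLift, genY]

@[simp]
theorem freeLift_genT (X Y : Fin n → L) (i j : Fin n) (h : i ≠ j) :
    freeLift X Y (genT i j h) = ⁅X i, Y j⁆ := by
  simp [freeLift, genT]

theorem freeLift_eq_zero_of_mem_tildeRel {X Y : Fin n → L} (h : TildeRelations X Y) :
    ∀ z ∈ tildeRel n, freeLift X Y z = 0 := by
  rintro z (((((((⟨i, j, _, rfl⟩ | ⟨i, j, _, rfl⟩) | ⟨i, j, -, rfl⟩) | ⟨i, j, -, rfl⟩) |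
    ⟨i, j, k, hjk, hij, hik, rfl⟩) | ⟨i, j, k, hjk, hij, hik, rfl⟩) | ⟨i, j, hij, rfl⟩) |
    ⟨i, j, hij, rfl⟩) <;>
  simp only [map_sub, map_add, LieHom.map_lie, freeLift_genX, freeLift_genY, freeLift_genT]
  · rw [h.symm, sub_self]
  · rw [sub_self]
  · exact h.comm_X i j
  · exact h.comm_Y i j
  · exact h.lie_X_t i j k hij hik hjk
  · exact h.lie_Y_t i j k hij hik hjk
  · exact h.lie_add_X_t i j hij
  · exact h.lie_add_Y_t i j hij

theorem map_genT_of_map_tildeRel {f : FreeLieAlgebra ℚ (ElGen n) →ₗ⁅ℚ⁆ L}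
    (hf : ∀ z ∈ tildeRel n, f z = 0) (i j : Fin n) (h : i ≠ j) :
    f (genT i j h) = ⁅f (genX i), f (genY j)⁆ := by
  simp only [tildeRel, Set.mem_union, or_imp, forall_and] at hf
  obtain ⟨⟨⟨⟨⟨⟨⟨-, t_eq⟩, -⟩, -⟩, -⟩, -⟩, -⟩, -⟩ := hf
  simpa [sub_eq_zero] using t_eq _ ⟨i, j, h, rfl⟩

theorem tildeRelations_of_map_tildeRel {f : FreeLieAlgebra ℚ (ElGen n) →ₗ⁅ℚ⁆ L}
    (hf : ∀ z ∈ tildeRel n, f z = 0) : TildeRelations (f ∘ genX) (f ∘ genY) := by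
  have t_eq := map_genT_of_map_tildeRel hf
  simp only [tildeRel, Set.mem_union, or_imp, forall_and] at hf
  obtain ⟨⟨⟨⟨⟨⟨⟨symm, -⟩, comm_X⟩, comm_Y⟩, lie_X_t⟩, lie_Y_t⟩, lie_add_X_t⟩, lie_add_Y_t⟩ := hf
  constructor <;> simp only [Function.comp_apply]
  · intro i j
    obtain rfl | hij := eq_or_ne i j
    · exact lie_self _
    · simpa using comm_X _ ⟨i, j, hij, rfl⟩
  · intro i j
    obtain rfl | hij := eq_or_ne i j
    · exact lie_self _
    · simpa using comm_Y _ ⟨i, j, hij, rfl⟩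
  · intro i j
    obtain rfl | hij := eq_or_ne i j
    · rfl
    · simpa [t_eq, sub_eq_zero] using symm _ ⟨i, j, hij, rfl⟩
  · intro i j k hij hik hjk
    simpa [t_eq] using lie_X_t _ ⟨i, j, k, hjk, hij, hik, rfl⟩
  · intro i j k hij hik hjk
    simpa [t_eq] using lie_Y_t _ ⟨i, j, k, hjk, hij, hik, rfl⟩
  · intro i j hij
    simpa [t_eq] using lie_add_X_t _ ⟨i, j, hij, rfl⟩
  · intro i j hij
    simpa [t_eq] using lie_add_Y_t _ ⟨i, j, hij, rfl⟩

theorem freeLift_lie_self_add_sum_genT {X Y : Fin n → L} (hY : ∑ i, Y i = 0) (i : Fin n) :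
    freeLift X Y (⁅genX i, genY i⁆ + ∑ j : Fin n, if h : i ≠ j then genT i j h else 0) = 0 := by
  have term (j : Fin n) : freeLift X Y (if h : i ≠ j then genT i j h else 0) =
      if i = j then 0 else ⁅X i, Y j⁆ := by
    split_ifs <;> simp_all
  calc
    _ = ∑ j, ((if i = j then ⁅X i, Y j⁆ else 0) + if i = j then 0 else ⁅X i, Y j⁆) := by
      rw [Finset.sum_add_distrib, Finset.sum_ite_eq, if_pos (Finset.mem_univ i)]
      simp only [map_add, LieHom.map_lie, freeLift_genX, freeLift_genY, map_sum, term]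
    _ = ⁅X i, ∑ j, Y j⁆ := by
      rw [lie_sum]
      refine Finset.sum_congr rfl fun j _ => ?_
      split_ifs <;> simp
    _ = 0 := by rw [hY, lie_zero]

theorem tildeRel_subset_t1Rel (n : ℕ) : tildeRel n ⊆ t1Rel n := by
  intro z hz
  simp only [tildeRel, t1Rel, Set.mem_union] at hz ⊢
  tauto

theorem freeLift_eq_zero_of_mem_t1Rel {X Y : Fin n → L} (h : TildeRelations X Y)
    (hY : ∑ i, Y i = 0) : ∀ z ∈ t1Rel n, freeLift X Y z = 0 := by
  rintro z ((((((((((hz | hz) | hz) | hz) | ⟨i, rfl⟩) | ⟨i, j, k, hij, hik, hjk, rfl⟩) |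
    ⟨i, j, k, l, hij, _, hik, hil, hjk, hjl, rfl⟩) | hz) | hz) | hz) | hz)
  any_goals
    refine freeLift_eq_zero_of_mem_tildeRel h z ?_
    simp only [tildeRel, Set.mem_union, hz, true_or, or_true]
  · exact freeLift_lie_self_add_sum_genT hY i
  · simpa using h.lie_t_add_t hij hik hjk
  · simpa using h.lie_t_t hij hik hil hjk hjl

theorem free_hom_ext_of_map_tildeRel {f g : FreeLieAlgebra ℚ (ElGen n) →ₗ⁅ℚ⁆ L}
    (hf : ∀ z ∈ tildeRel n, f z = 0) (hg : ∀ z ∈ tildeRel n, g z = 0)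
    (hX : ∀ i, f (genX i) = g (genX i)) (hY : ∀ i, f (genY i) = g (genY i)) : f = g := by
  apply FreeLieAlgebra.hom_ext
  rintro (i | i | ⟨⟨i, j⟩, hij⟩)
  · exact hX i
  · exact hY i
  · change f (genT i j hij) = g (genT i j hij)
    rw [map_genT_of_map_tildeRel hf, map_genT_of_map_tildeRel hg, hX, hY]

end Relators

namespace Ltilde

variable {n : ℕ} {L : Type*} [LieRing L] [LieAlgebra ℚ L]

theorem mk_eq_zero_of_mem_tildeRel :
    ∀ z ∈ tildeRel n, lieQuotientMk (tildeIdeal n) z = 0 :=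
  fun _ hz => lieQuotientMk_lieSpan_eq_zero hz

theorem tildeRelations : TildeRelations (LtildeMk n ∘ genX) (LtildeMk n ∘ genY) :=
  tildeRelations_of_map_tildeRel mk_eq_zero_of_mem_tildeRel

theorem hom_ext {f g : Ltilde n →ₗ⁅ℚ⁆ L}
    (hX : ∀ i, f (LtildeMk n (genX i)) = g (LtildeMk n (genX i)))
    (hY : ∀ i, f (LtildeMk n (genY i)) = g (LtildeMk n (genY i))) : f = g := by
  have kills (f : Ltilde n →ₗ⁅ℚ⁆ L) (z) (hz : z ∈ tildeRel n) :
      f.comp (lieQuotientMk (tildeIdeal n)) z = 0 := by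
    rw [LieHom.comp_apply, mk_eq_zero_of_mem_tildeRel z hz, map_zero]
  have free_eq := free_hom_ext_of_map_tildeRel (kills f) (kills g) hX hY
  ext x
  obtain ⟨z, rfl⟩ := lieQuotientMk_surjective _ x
  exact LieHom.congr_fun free_eq z

/-- The homomorphism `L̃_n → L` defined by families satisfying the relations of `L̃_n`. -/
noncomputable def lift {X Y : Fin n → L} (h : TildeRelations X Y) : Ltilde n →ₗ⁅ℚ⁆ L :=
  lieQuotientLift (tildeRel n) (freeLift X Y) (freeLift_eq_zero_of_mem_tildeRel h)

theorem lift_mk {X Y : Fin n → L} (h : TildeRelations X Y) (z : FreeLieAlgebra ℚ (ElGen n)) :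
    lift h (LtildeMk n z) = freeLift X Y z := rfl

end Ltilde

theorem eq_of_sum_eq_zero_of_castSucc {M : Type*} [AddCommGroup M] {n : ℕ} {a b : Fin (n + 1) → M}
    (ha : ∑ i, a i = 0) (hb : ∑ i, b i = 0) (h : ∀ i : Fin n, a i.castSucc = b i.castSucc) :
    a = b := by
  rw [Fin.sum_univ_castSucc] at ha hb
  refine funext (Fin.lastCases ?_ h)
  rw [eq_neg_of_add_eq_zero_right ha, eq_neg_of_add_eq_zero_right hb, Finset.sum_congr rfl
    fun i _ => h i]

/-- The homomorphism `t_{1,n} → L` defined by families satisfying the relations of `L̃_n` such that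
`∑ Y i = 0`; the other relations of `t_{1,n}` are consequences. -/
noncomputable def t1.lift {n : ℕ} {L : Type*} [LieRing L] [LieAlgebra ℚ L] {X Y : Fin n → L}
    (h : TildeRelations X Y) (hY : ∑ i, Y i = 0) : t1 n →ₗ⁅ℚ⁆ L :=
  lieQuotientLift (t1Rel n) (freeLift X Y) (freeLift_eq_zero_of_mem_t1Rel h hY)

theorem t1.lift_mk {n : ℕ} {L : Type*} [LieRing L] [LieAlgebra ℚ L] {X Y : Fin n → L}
    (h : TildeRelations X Y) (hY : ∑ i, Y i = 0) (z : FreeLieAlgebra ℚ (ElGen n)) :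
    t1.lift h hY (t1Mk n z) = freeLift X Y z := rfl

namespace t1Bar

variable {n : ℕ} {L : Type*} [LieRing L] [LieAlgebra ℚ L]

/-- The quotient map `t1BarMk` as a Lie algebra homomorphism. -/
noncomputable def mkHom (n : ℕ) : FreeLieAlgebra ℚ (ElGen n) →ₗ⁅ℚ⁆ t1Bar n :=
  (lieQuotientMk (centralIdeal n)).comp (lieQuotientMk (t1Ideal n))

theorem mkHom_surjective (n : ℕ) : Function.Surjective (mkHom n) :=
  (lieQuotientMk_surjective _).comp (lieQuotientMk_surjective _)

theorem mkHom_eq_zero_of_mem_tildeRel : ∀ z ∈ tildeRel n, mkHom n z = 0 := by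
  intro z hz
  have hz' : lieQuotientMk (t1Ideal n) z = 0 :=
    lieQuotientMk_lieSpan_eq_zero (tildeRel_subset_t1Rel n hz)
  rw [mkHom, LieHom.comp_apply, hz', map_zero]

theorem tildeRelations : TildeRelations (t1BarMk n ∘ genX) (t1BarMk n ∘ genY) :=
  tildeRelations_of_map_tildeRel mkHom_eq_zero_of_mem_tildeRel

theorem mk_genT (i j : Fin n) (h : i ≠ j) :
    t1BarMk n (genT i j h) = ⁅t1BarMk n (genX i), t1BarMk n (genY j)⁆ :=
  map_genT_of_map_tildeRel mkHom_eq_zero_of_mem_tildeRel i j h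

theorem sum_genX : ∑ i, t1BarMk n (genX i) = 0 :=
  (map_sum (mkHom n) _ _).symm.trans (lieQuotientMk_lieSpan_eq_zero (Set.mem_insert _ _))

theorem sum_genY : ∑ i, t1BarMk n (genY i) = 0 :=
  (map_sum (mkHom n) _ _).symm.trans
    (lieQuotientMk_lieSpan_eq_zero (Set.mem_insert_of_mem _ rfl))

theorem hom_ext_castSucc {f g : t1Bar (n + 1) →ₗ⁅ℚ⁆ L}
    (hX : ∀ i : Fin n, f (t1BarMk _ (genX i.castSucc)) = g (t1BarMk _ (genX i.castSucc)))
    (hY : ∀ i : Fin n, f (t1BarMk _ (genY i.castSucc)) = g (t1BarMk _ (genY i.castSucc))) :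
    f = g := by
  have kills (f : t1Bar (n + 1) →ₗ⁅ℚ⁆ L) (z) (hz : z ∈ tildeRel (n + 1)) :
      f.comp (mkHom (n + 1)) z = 0 := by
    rw [LieHom.comp_apply, mkHom_eq_zero_of_mem_tildeRel z hz, map_zero]
  have sum_X (f : t1Bar (n + 1) →ₗ⁅ℚ⁆ L) : ∑ i, f (t1BarMk _ (genX i)) = 0 := by
    rw [← map_sum, sum_genX, map_zero]
  have sum_Y (f : t1Bar (n + 1) →ₗ⁅ℚ⁆ L) : ∑ i, f (t1BarMk _ (genY i)) = 0 := by
    rw [← map_sum, sum_genY, map_zero]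
  have free_eq := free_hom_ext_of_map_tildeRel (kills f) (kills g)
    (congrFun (eq_of_sum_eq_zero_of_castSucc (sum_X f) (sum_X g) hX))
    (congrFun (eq_of_sum_eq_zero_of_castSucc (sum_Y f) (sum_Y g) hY))
  ext x
  obtain ⟨z, rfl⟩ := mkHom_surjective _ x
  exact LieHom.congr_fun free_eq z

/-- The homomorphism `t̄_{1,n} → L` defined by families with sum zero that satisfy the relations
of `L̃_n`. -/
noncomputable def lift {X Y : Fin n → L} (h : TildeRelations X Y) (hX : ∑ i, X i = 0)
    (hY : ∑ i, Y i = 0) : t1Bar n →ₗ⁅ℚ⁆ L :=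
  lieQuotientLift {t1Mk n (∑ i, genX i), t1Mk n (∑ i, genY i)} (t1.lift h hY) <| by
    rintro _ (rfl | rfl) <;> simp [t1.lift_mk, hX, hY]

theorem lift_mk {X Y : Fin n → L} (h : TildeRelations X Y) (hX : ∑ i, X i = 0)
    (hY : ∑ i, Y i = 0) (z : FreeLieAlgebra ℚ (ElGen n)) :
    lift h hX hY (t1BarMk n z) = freeLift X Y z := rfl

end t1Bar

section Isomorphism

variable {n : ℕ}

/-- The homomorphism `L̃_n → t̄_{1,n+1}` given by `X̃_i ↦ X_i`, `Ỹ_i ↦ Y_i`, `t̃_{ij} ↦ t_{ij}`. -/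
noncomputable def tildeToBar (n : ℕ) : Ltilde n →ₗ⁅ℚ⁆ t1Bar (n + 1) :=
  Ltilde.lift (t1Bar.tildeRelations.comp (Fin.castSucc_injective n))

theorem tildeToBar_genX (i : Fin n) :
    tildeToBar n (LtildeMk n (genX i)) = t1BarMk (n + 1) (genX i.castSucc) :=
  (Ltilde.lift_mk _ _).trans (freeLift_genX _ _ i)

theorem tildeToBar_genY (i : Fin n) :
    tildeToBar n (LtildeMk n (genY i)) = t1BarMk (n + 1) (genY i.castSucc) :=
  (Ltilde.lift_mk _ _).trans (freeLift_genY _ _ i)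

theorem tildeToBar_genT (i j : Fin n) (h : i ≠ j) :
    tildeToBar n (LtildeMk n (genT i j h)) =
      t1BarMk (n + 1) (genT i.castSucc j.castSucc ((Fin.castSucc_injective n).ne h)) :=
  ((Ltilde.lift_mk _ _).trans (freeLift_genT _ _ i j h)).trans (t1Bar.mk_genT _ _ _).symm

/-- The extension of a family by one last entry that makes its sum zero. -/
def snocNegSum {M : Type*} [AddCommGroup M] (a : Fin n → M) : Fin (n + 1) → M :=
  Fin.snoc a (-∑ i, a i)

theorem snocNegSum_castSucc {M : Type*} [AddCommGroup M] (a : Fin n → M) (i : Fin n) :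
    snocNegSum a i.castSucc = a i :=
  Fin.snoc_castSucc (α := fun _ => M) _ _ _

theorem sum_snocNegSum {M : Type*} [AddCommGroup M] (a : Fin n → M) :
    ∑ i, snocNegSum a i = 0 := by
  simp [snocNegSum, Fin.sum_univ_castSucc]

theorem TildeRelations.extend {L : Type*} [LieRing L] {X Y : Fin n → L}
    (h : TildeRelations X Y) : TildeRelations (snocNegSum X) (snocNegSum Y) := by
  refine of_comp (e := Fin.castSucc) (o := Fin.last n) ?_ (fun _ => Fin.exists_castSucc_eq.2)
    (sum_snocNegSum X) (sum_snocNegSum Y)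
  simpa only [Function.comp_def, snocNegSum_castSucc] using h

/-- The inverse of `tildeToBar`, sending the last generators to minus the sum of the others. -/
noncomputable def barToTilde (n : ℕ) : t1Bar (n + 1) →ₗ⁅ℚ⁆ Ltilde n :=
  t1Bar.lift Ltilde.tildeRelations.extend (sum_snocNegSum _) (sum_snocNegSum _)

theorem barToTilde_genX (i : Fin n) :
    barToTilde n (t1BarMk (n + 1) (genX i.castSucc)) = LtildeMk n (genX i) := by
  rw [barToTilde, t1Bar.lift_mk, freeLift_genX, snocNegSum_castSucc, Function.comp_apply]

theorem barToTilde_genY (i : Fin n) :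
    barToTilde n (t1BarMk (n + 1) (genY i.castSucc)) = LtildeMk n (genY i) := by
  rw [barToTilde, t1Bar.lift_mk, freeLift_genY, snocNegSum_castSucc, Function.comp_apply]

theorem barToTilde_comp_tildeToBar : (barToTilde n).comp (tildeToBar n) = LieHom.id := by
  apply Ltilde.hom_ext <;> intro i
  · rw [LieHom.comp_apply, tildeToBar_genX, barToTilde_genX, LieHom.id_apply]
  · rw [LieHom.comp_apply, tildeToBar_genY, barToTilde_genY, LieHom.id_apply]

theorem tildeToBar_comp_barToTilde : (tildeToBar n).comp (barToTilde n) = LieHom.id := by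
  apply t1Bar.hom_ext_castSucc <;> intro i
  · rw [LieHom.comp_apply, barToTilde_genX, tildeToBar_genX, LieHom.id_apply]
  · rw [LieHom.comp_apply, barToTilde_genY, tildeToBar_genY, LieHom.id_apply]

theorem tildeToBar_bijective : Function.Bijective (tildeToBar n) :=
  Function.bijective_iff_has_inverse.2 ⟨barToTilde n,
    LieHom.congr_fun barToTilde_comp_tildeToBar, LieHom.congr_fun tildeToBar_comp_barToTilde⟩

end Isomorphism

/-- the assignment `X̃_i ↦ X_i`, `Ỹ_i ↦ Y_i`, `t̃_{ij} ↦ t_{ij}` (indices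
viewed among the `n+1` indices of `t̄_{1,n+1}`) determines a well-defined Lie algebra
homomorphism `L̃_n → t̄_{1,n+1}`, and this homomorphism is an isomorphism. -/
theorem stmt_17 (n : ℕ) (hn : 1 ≤ n) :
    ∃ φ : Ltilde n →ₗ⁅ℚ⁆ t1Bar (n + 1),
      (∀ i : Fin n, φ (LtildeMk n (genX i)) = t1BarMk (n + 1) (genX i.castSucc)) ∧
      (∀ i : Fin n, φ (LtildeMk n (genY i)) = t1BarMk (n + 1) (genY i.castSucc)) ∧
      (∀ (i j : Fin n) (h : i ≠ j),
        φ (LtildeMk n (genT i j h)) =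
          t1BarMk (n + 1) (genT i.castSucc j.castSucc ((Fin.castSucc_injective n).ne h))) ∧
      Function.Bijective φ := by
  exact ⟨tildeToBar n, tildeToBar_genX, tildeToBar_genY, tildeToBar_genT, tildeToBar_bijective⟩
end

section
/- Let L be a Lie algebra over a commutative ring and let X, X', Y, Y' ∈ L satisfy ⁅Y, Y'⁆ = 0, ⁅X, Y'⁆ = ⁅X', Y⁆, and ⁅⁅X', Y⁆, Y + Y'⁆ = 0. Then for every integer k ≥ 1, (ad Y)^k (X') = (−1)^{k+1} · (ad Y')^k (X), where ad Z denotes the adjoint map W ↦ ⁅Z, W⁆ and (ad Z)^k its k-fold iterate. -/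
/-!
Put `z = ⁅Y, X'⁆ = ⁅Y', X⁆`. The third hypothesis says that `ad Y` and `-ad Y'` agree at `z`.
Commuting maps which agree at a point have iterates which agree at that point, so
`(ad Y)^n z = (-ad Y')^n z` for all `n`; take `n = k - 1`.
-/

section Module

variable {R M : Type*} [Semiring R]

theorem pow_apply_eq_pow_apply_of_commute [AddCommMonoid M] [Module R M] {f g : Module.End R M}
    (hfg : Commute f g) {z : M} (hz : f z = g z) (n : ℕ) : (f ^ n) z = (g ^ n) z := by
  have comm : Function.Commute f g := DFunLike.congr_fun hfg.eq
  rw [Module.End.pow_apply, Module.End.pow_apply, comm.iterate_eq_of_map_eq n hz]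

theorem pow_apply_eq_neg_one_pow_smul_pow_apply [AddCommGroup M] [Module R M]
    {f g : Module.End R M} (hfg : Commute f g) {x x' : M} (hx : g x = f x')
    (hadd : f (f x') + g (f x') = 0) {k : ℕ} (hk : 1 ≤ k) :
    (f ^ k) x' = ((-1 : ℤ) ^ (k + 1)) • (g ^ k) x := by
  obtain ⟨n, rfl⟩ := Nat.exists_eq_add_of_le' hk
  have agree : f (f x') = (-g) (f x') := eq_neg_of_add_eq_zero_left hadd
  calc (f ^ (n + 1)) x' = (f ^ n) (f x') := by rw [pow_succ, Module.End.mul_apply]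
    _ = ((-g) ^ n) (f x') := pow_apply_eq_pow_apply_of_commute hfg.neg_right agree n
    _ = ((-1 : ℤ) ^ n) • (g ^ n) (g x) := by
        rw [hx, ← neg_one_zsmul g, smul_pow, LinearMap.smul_apply]
    _ = ((-1 : ℤ) ^ (n + 1 + 1)) • (g ^ (n + 1)) x := by
        rw [pow_succ g, Module.End.mul_apply, pow_add _ n 2, neg_one_sq, mul_one]

end Module

section LieModule

variable {R L M : Type*} [CommRing R] [LieRing L] [LieAlgebra R L]
  [AddCommGroup M] [Module R M] [LieRingModule L M] [LieModule R L M]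

theorem commute_toEnd_iff_lie_mem_ker {Y Y' : L} :
    Commute (LieModule.toEnd R L M Y) (LieModule.toEnd R L M Y') ↔
      ⁅Y, Y'⁆ ∈ LieModule.ker R L M := by
  simp only [commute_iff_eq, LinearMap.ext_iff, Module.End.mul_apply, LieModule.toEnd_apply_apply,
    LieModule.mem_ker, lie_lie, sub_eq_zero]

theorem stmt_19_general {Y Y' : L} {x x' : M} (hY : ⁅Y, Y'⁆ ∈ LieModule.ker R L M)
    (hx : ⁅Y', x⁆ = ⁅Y, x'⁆) (hadd : ⁅Y + Y', ⁅Y, x'⁆⁆ = 0) {k : ℕ} (hk : 1 ≤ k) :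
    (LieModule.toEnd R L M Y ^ k) x' =
      ((-1 : ℤ) ^ (k + 1)) • (LieModule.toEnd R L M Y' ^ k) x :=
  pow_apply_eq_neg_one_pow_smul_pow_apply (commute_toEnd_iff_lie_mem_ker.mpr hY) hx
    ((add_lie Y Y' ⁅Y, x'⁆).symm.trans hadd) hk

end LieModule

/-!
STATEMENT 19: In any Lie algebra, if `⁅Y, Y'⁆ = 0`, `⁅X, Y'⁆ = ⁅X', Y⁆` and
`⁅⁅X', Y⁆, Y + Y'⁆ = 0`, then `(ad Y)^k X' = (-1)^(k+1) • (ad Y')^k X` for every `k ≥ 1`.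
-/

theorem stmt_19 {R L : Type*} [CommRing R] [LieRing L] [LieAlgebra R L]
    (X X' Y Y' : L)
    (h1 : ⁅Y, Y'⁆ = 0) (h2 : ⁅X, Y'⁆ = ⁅X', Y⁆) (h3 : ⁅⁅X', Y⁆, Y + Y'⁆ = 0)
    (k : ℕ) (hk : 1 ≤ k) :
    ((LieAlgebra.ad R L Y) ^ k) X' = ((-1 : ℤ) ^ (k + 1)) • ((LieAlgebra.ad R L Y') ^ k) X := by
  have hX : ⁅Y', X⁆ = ⁅Y, X'⁆ := by rw [← lie_skew, h2, lie_skew]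
  have hadd : ⁅Y + Y', ⁅Y, X'⁆⁆ = 0 := by
    rwa [← lie_skew X' Y, neg_lie, lie_skew] at h3
  exact stmt_19_general (h1 ▸ zero_mem _) hX hadd hk
end
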